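/- arXiv:1405.6266 — 4 statements merged into one kernel-verified Lean document; each statement's English description precedes it below -/
import Mathlib

section
/- Fix an integer base g ≥ 2, a real ε > 0, and k ∈ ℕ. There exists δ = δ(ε,k) > 0 such that for all sufficiently large m, the number of integers a in the interval [1, m] that are not (ε,k)-normal to base g is at most m^{1−δ}. -/
open Filter

/-- Number of (possibly overlapping) occurrences of the string `σ` as a contiguous
substring of the string `w` (strings are lists of base-`g` digits). -/
def nu (w σ : List ℕ) : ℕ :=
  ((Finset.range w.length).filter (fun i => σ <+: w.drop i)).card

/-- The string of base-`g` digits of `a`, most significant digit first. -/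
def digs (g a : ℕ) : List ℕ :=
  (Nat.digits g a).reverse

/-- `L(a) = ⌊log_g a⌋ + 1`, the number of base-`g` digits of `a ≥ 1`. -/
def Lg (g a : ℕ) : ℕ :=
  Nat.log g a + 1

/-- A positive integer `a` is `(ε,k)`-normal to base `g` if every string `σ` of `k`
base-`g` digits satisfies `|ν(a,σ)/L(a) − g^{−k}| ≤ ε`. -/
def EKNormalInt (g : ℕ) (ε : ℝ) (k : ℕ) (a : ℕ) : Prop :=
  ∀ σ : List ℕ, σ.length = k → (∀ d ∈ σ, d < g) →
    |(nu (digs g a) σ : ℝ) / (Lg g a : ℝ) - 1 / (g : ℝ) ^ k| ≤ ε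


lemma ce_sum_mul (F : ℕ → ℝ) (A B : ℕ) :
    ∑ a ∈ Finset.range (A * B), F a
      = ∑ y ∈ Finset.range B, ∑ x ∈ Finset.range A, F (A * y + x) := by
  induction B with
  | zero => simp
  | succ B ih => rw [Nat.mul_succ, Finset.sum_range_add, ih, Finset.sum_range_succ]

lemma ce_moment0 (f : ℕ → ℝ) (G T : ℕ) (hG : 0 < G) (M : ℕ) :
    ∑ a ∈ Finset.range (G ^ M * T), ∏ i ∈ Finset.range M, f ((a / G ^ i) % G)
      = T * (∑ d ∈ Finset.range G, f d) ^ M := by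
  induction M with
  | zero => simp
  | succ M ih =>
    rw [show G ^ (M + 1) * T = G * (G ^ M * T) by ring, ce_sum_mul]
    have : ∀ y ∈ Finset.range (G ^ M * T), ∑ x ∈ Finset.range G,
        ∏ i ∈ Finset.range (M + 1), f (((G * y + x) / G ^ i) % G)
        = (∏ i ∈ Finset.range M, f ((y / G ^ i) % G)) * ∑ d ∈ Finset.range G, f d := by
      intro y _
      rw [Finset.mul_sum]
      refine Finset.sum_congr rfl fun x hx => ?_
      have hx := Finset.mem_range.1 hx
      rw [Finset.prod_range_succ']
      congr 1
      · refine Finset.prod_congr rfl fun i _ => ?_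
        rw [pow_succ', ← Nat.div_div_eq_div_mul, Nat.mul_add_div hG, Nat.div_eq_of_lt hx, add_zero]
      · simp [Nat.mod_eq_of_lt hx]
    rw [Finset.sum_congr rfl this, ← Finset.sum_mul, ih, pow_succ]
    ring

lemma ce_moment (f : ℕ → ℝ) (G T R : ℕ) (hG : 0 < G) (hR : 0 < R) (M : ℕ) :
    ∑ a ∈ Finset.range (R * (G ^ M * T)), ∏ i ∈ Finset.range M, f ((a / R / G ^ i) % G)
      = R * (T * (∑ d ∈ Finset.range G, f d) ^ M) := by
  rw [ce_sum_mul, ← ce_moment0 f G T hG M, Finset.mul_sum]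
  refine Finset.sum_congr rfl fun y _ => ?_
  rw [← nsmul_eq_mul]
  conv_rhs => rw [← Finset.card_range R]
  rw [← Finset.sum_const]
  refine Finset.sum_congr rfl fun x hx => ?_
  have hx := Finset.mem_range.1 hx
  rw [Nat.mul_add_div hR, Nat.div_eq_of_lt hx, add_zero]

/-- centred indicator -/
noncomputable def ceY (G s d : ℕ) : ℝ := (if d = s then 1 else 0) - 1 / (G : ℝ)

lemma ce_mgf (G s : ℕ) (hs : s < G) (t : ℝ) (ht : |t| ≤ 1) :
    ∑ d ∈ Finset.range G, Real.exp (t * ceY G s d) ≤ G * Real.exp (t ^ 2) := by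
  have hG : (0:ℝ) < G := by exact_mod_cast (by omega : 0 < G)
  have hG1 : (1:ℝ) ≤ G := by exact_mod_cast (by omega : 1 ≤ G)
  have hinv : 1 / (G:ℝ) ≤ 1 := by rw [div_le_one hG]; exact hG1
  have hinv0 : 0 < 1 / (G:ℝ) := by positivity
  have hY : ∀ d, |ceY G s d| ≤ 1 := by
    intro d
    unfold ceY
    rw [abs_le]
    split_ifs <;> constructor <;> linarith
  have h1 : ∀ d ∈ Finset.range G, Real.exp (t * ceY G s d) ≤ 1 + t * ceY G s d + t ^ 2 := by
    intro d _
    have hb : |t * ceY G s d| ≤ 1 := by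
      rw [abs_mul]; exact mul_le_one₀ ht (abs_nonneg _) (hY d)
    have := Real.abs_exp_sub_one_sub_id_le hb
    have h2 := (abs_le.1 this).2
    have h3 : (t * ceY G s d) ^ 2 ≤ t ^ 2 := by
      rw [mul_pow]
      have : (ceY G s d) ^ 2 ≤ 1 := by rw [sq_le_one_iff_abs_le_one]; exact hY d
      nlinarith [sq_nonneg t]
    linarith
  have h0 : ∑ d ∈ Finset.range G, ceY G s d = 0 := by
    simp only [ceY, Finset.sum_sub_distrib, Finset.sum_ite_eq', Finset.mem_range, hs, if_true,
      Finset.sum_const, Finset.card_range, nsmul_eq_mul]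
    field_simp; simp
  calc _ ≤ ∑ d ∈ Finset.range G, (1 + t * ceY G s d + t ^ 2) := Finset.sum_le_sum h1
    _ = G * (t ^ 2 + 1) := by
      rw [Finset.sum_add_distrib, Finset.sum_add_distrib, ← Finset.mul_sum, h0]
      simp; ring
    _ ≤ _ := by
      have := Real.add_one_le_exp (t ^ 2)
      gcongr

/-- block sum -/
noncomputable def ceS (g k s r M a : ℕ) : ℝ :=
  ∑ i ∈ Finset.range M, ceY (g ^ k) s ((a / g ^ (r + k * i)) % g ^ k)

lemma ce_chernoff (g k s r M L : ℕ) (hg : 2 ≤ g) (hs : s < g ^ k) (hL : r + k * M ≤ L)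
    (hk : 1 ≤ k) (θ η : ℝ) (hη : 0 < η) (hη1 : η ≤ 1) (hθ : θ = 1 ∨ θ = -1) :
    (((Finset.range (g ^ L)).filter fun a => η * L ≤ θ * ceS g k s r M a).card : ℝ)
      ≤ (g : ℝ) ^ L * Real.exp (- (η ^ 2 / 4) * L) := by
  obtain ⟨T, rfl⟩ := Nat.exists_eq_add_of_le hL
  set L := r + k * M + T with hLdef
  have hg0 : 0 < g := by omega
  have hθ2 : θ ^ 2 = 1 := by rcases hθ with h | h <;> rw [h] <;> norm_num
  have hθa : |θ| = 1 := by rcases hθ with h | h <;> rw [h] <;> norm_num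
  set t := θ * (η / 2) with ht
  have htt : |t| ≤ 1 := by
    rw [ht, abs_mul, hθa, abs_of_pos (by linarith)]; linarith
  have ht2 : t ^ 2 = η ^ 2 / 4 := by rw [ht, mul_pow, hθ2]; ring
  have hmom := ce_moment (fun d => Real.exp (t * ceY (g ^ k) s d)) (g ^ k) (g ^ T) (g ^ r)
    (by positivity) (by positivity) M
  have hgL : g ^ r * ((g ^ k) ^ M * g ^ T) = g ^ L := by
    rw [hLdef, pow_add, pow_add, pow_mul]; ring
  rw [hgL] at hmom
  have hprod : ∀ a, ∏ i ∈ Finset.range M,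
      Real.exp (t * ceY (g ^ k) s ((a / g ^ r / (g ^ k) ^ i) % g ^ k))
      = Real.exp (t * ceS g k s r M a) := by
    intro a
    rw [← Real.exp_sum, ceS, Finset.mul_sum]
    congr 1
    refine Finset.sum_congr rfl fun i _ => ?_
    rw [Nat.div_div_eq_div_mul, ← pow_mul, ← pow_add]
  simp only [hprod] at hmom
  have hM : (M : ℝ) ≤ L := by
    have : M ≤ L := by nlinarith
    exact_mod_cast this
  have hup : ∑ a ∈ Finset.range (g ^ L), Real.exp (t * ceS g k s r M a)
      ≤ (g : ℝ) ^ L * Real.exp (η ^ 2 / 4 * L) := by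
    rw [hmom]
    have h1 := ce_mgf (g ^ k) s hs t htt
    calc _ ≤ ((g ^ r : ℕ) : ℝ) * (((g ^ T : ℕ) : ℝ) *
            (((g ^ k : ℕ) : ℝ) * Real.exp (t ^ 2)) ^ M) := by
          gcongr
      _ = (g : ℝ) ^ L * Real.exp (t ^ 2 * M) := by
          rw [mul_pow, ← Real.exp_nat_mul, mul_comm (M : ℝ)]
          rw [← Nat.cast_pow g L, ← hgL]; push_cast; ring
      _ ≤ _ := by rw [ht2]; gcongr
  have hlow : (((Finset.range (g ^ L)).filter fun a => η * L ≤ θ * ceS g k s r M a).card : ℝ)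
      * Real.exp (η ^ 2 / 2 * L) ≤ ∑ a ∈ Finset.range (g ^ L), Real.exp (t * ceS g k s r M a) := by
    rw [← nsmul_eq_mul]
    refine (Finset.card_nsmul_le_sum _ (fun a => Real.exp (t * ceS g k s r M a)) _ ?_).trans
      (Finset.sum_le_sum_of_subset_of_nonneg (Finset.filter_subset _ _)
        (fun _ _ _ => (Real.exp_pos _).le))
    intro a ha
    have := (Finset.mem_filter.1 ha).2
    apply Real.exp_le_exp.2
    rw [ht]
    nlinarith
  have := hlow.trans hup
  rw [← le_div_iff₀ (Real.exp_pos _), mul_div_assoc, ← Real.exp_sub] at this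
  have e : η ^ 2 / 4 * (L:ℝ) - η ^ 2 / 2 * L = - (η ^ 2 / 4) * L := by ring
  rwa [e] at this

lemma ce_regroup (F : ℕ → ℝ) (k L : ℕ) (hk : 1 ≤ k) (hL : k ≤ L) :
    ∑ j ∈ Finset.range (L + 1 - k), F j
      = ∑ r ∈ Finset.range k, ∑ i ∈ Finset.range ((L - r) / k), F (r + k * i) := by
  rw [Finset.sum_sigma']
  refine Finset.sum_bij' (fun j _ => (⟨j % k, j / k⟩ : Σ _ : ℕ, ℕ)) (fun p _ => p.1 + k * p.2)
    ?_ ?_ ?_ ?_ ?_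
  · intro j hj
    have hj := Finset.mem_range.1 hj
    have h1 := Nat.mod_lt j (show 0 < k by omega)
    have h2 := Nat.mod_add_div j k
    simp only [Finset.mem_sigma, Finset.mem_range]
    refine ⟨h1, ?_⟩
    rw [Nat.lt_iff_add_one_le, Nat.le_div_iff_mul_le (by omega)]
    have : (j / k + 1) * k = k * (j / k) + k := by ring
    omega
  · rintro ⟨r, i⟩ h
    simp only [Finset.mem_sigma, Finset.mem_range] at h ⊢
    obtain ⟨h1, h2⟩ := h
    rw [Nat.lt_iff_add_one_le, Nat.le_div_iff_mul_le (by omega)] at h2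
    have : (i + 1) * k = k * i + k := by ring
    omega
  · intro j _
    exact Nat.mod_add_div j k
  · rintro ⟨r, i⟩ h
    simp only [Finset.mem_sigma, Finset.mem_range] at h
    have h1 : (r + k * i) % k = r := by rw [Nat.add_mul_mod_self_left, Nat.mod_eq_of_lt h.1]
    have h2 : (r + k * i) / k = i := by
      rw [Nat.add_mul_div_left _ _ (by omega), Nat.div_eq_of_lt h.1, zero_add]
    simp only [h1, h2]
  · intro j _
    simp only [Nat.mod_add_div]

lemma ce_nu (g k a : ℕ) (hg : 2 ≤ g) (hk : 1 ≤ k) (σ : List ℕ) (hσ : σ.length = k)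
    (hd : ∀ d ∈ σ, d < g) :
    nu (digs g a) σ = ((Finset.range ((Nat.digits g a).length + 1 - k)).filter
      fun j => (a / g ^ j) % g ^ k = Nat.ofDigits g σ.reverse).card := by
  set D := Nat.digits g a with hD
  have key : ∀ i j, i + j + k = D.length →
      (σ <+: (digs g a).drop i ↔ (a / g ^ j) % g ^ k = Nat.ofDigits g σ.reverse) := by
    intro i j hij
    have hDg : ∀ d ∈ D, d < g := fun d h => Nat.digits_lt_base (by omega) h
    rw [Nat.self_div_pow_eq_ofDigits_drop j a (by omega),
      Nat.ofDigits_mod_pow_eq_ofDigits_take k (by omega) _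
        (fun d h => hDg d (List.mem_of_mem_drop h))]
    have hlen : ((D.drop j).take k).length = k := by simp; omega
    have h2 : Nat.ofDigits g ((D.drop j).take k) = Nat.ofDigits g σ.reverse ↔
        (D.drop j).take k = σ.reverse := by
      refine ⟨fun h => Nat.ofDigits_inj_of_len_eq (by omega : 1 < g) (by simp [hσ]; omega)
        (fun d h => hDg d (List.mem_of_mem_drop (List.mem_of_mem_take h)))
        (fun d h => hd d (List.mem_reverse.1 h)) h, fun h => by rw [h]⟩
    rw [h2, List.prefix_iff_eq_take, digs, ← hD, List.drop_reverse, List.take_reverse, hσ,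
      ← List.reverse_inj, List.reverse_reverse]
    have e1 : D.length - i = j + k := by omega
    rw [e1, List.drop_take]
    have e2 : (D.take (j + k)).length - k = j := by simp; omega
    rw [e2]
    have e3 : j + k - j = k := by omega
    rw [e3]
    exact eq_comm
  have hlen : (digs g a).length = D.length := by simp [digs, hD]
  have short : ∀ i, σ <+: (digs g a).drop i → i < D.length → i + k ≤ D.length := by
    intro i h hi
    have := h.length_le
    rw [List.length_drop, hlen, hσ] at this
    omega
  unfold nu
  rw [hlen]
  refine Finset.card_nbij' (fun i => D.length - k - i) (fun j => D.length - k - j) ?_ ?_ ?_ ?_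
  · intro i hi
    simp only [Finset.coe_filter, Finset.mem_range, Set.mem_ofPred_eq] at hi ⊢
    have := short i hi.2 hi.1
    refine ⟨by omega, (key i _ (by omega)).1 hi.2⟩
  · intro j hj
    simp only [Finset.coe_filter, Finset.mem_range, Set.mem_ofPred_eq] at hj ⊢
    refine ⟨by omega, (key _ j (by omega)).2 hj.2⟩
  · intro i hi
    simp only [Finset.coe_filter, Finset.mem_range, Set.mem_ofPred_eq] at hi ⊢
    have := short i hi.2 hi.1
    omega
  · intro j hj
    simp only [Finset.coe_filter, Finset.mem_range, Set.mem_ofPred_eq] at hj ⊢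
    omega


lemma ce_bad (g k a : ℕ) (hg : 2 ≤ g) (hk : 1 ≤ k) (ha : 1 ≤ a) (ε η : ℝ) (hη : η ≤ ε / (2 * k))
    (hkL : k ≤ Lg g a) (hL : 2 * k ≤ ε * Lg g a) (hbad : ¬ EKNormalInt g ε k a) :
    ∃ s < g ^ k, ∃ r < k, ∃ θ ∈ ({1, -1} : Finset ℝ),
      η * Lg g a ≤ θ * ceS g k s r ((Lg g a - r) / k) a := by
  by_contra hcon
  push Not at hcon
  apply hbad
  intro σ hσ hd
  have hDlen : (Nat.digits g a).length = Lg g a := Nat.digits_len g a (by omega) (by omega)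
  rw [ce_nu g k a hg hk σ hσ hd, hDlen]
  set L := Lg g a with hLd
  set s := Nat.ofDigits g σ.reverse with hs
  have hsG : s < g ^ k := by
    have := Nat.ofDigits_lt_base_pow_length (b := g) (l := σ.reverse) (by omega)
      (fun d h => hd d (List.mem_reverse.1 h))
    simpa [hσ] using this
  have hcon := hcon s hsG
  have hre := ce_regroup (fun j => ceY (g ^ k) s ((a / g ^ j) % g ^ k)) k L hk hkL
  have hsum : ∑ j ∈ Finset.range (L + 1 - k), ceY (g ^ k) s ((a / g ^ j) % g ^ k)
      = (((Finset.range (L + 1 - k)).filter fun j => (a / g ^ j) % g ^ k = s).card : ℝ)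
        - ((L + 1 - k : ℕ) : ℝ) * (1 / (g:ℝ) ^ k) := by
    simp only [ceY, Finset.sum_sub_distrib, Finset.sum_const, Finset.card_range, nsmul_eq_mul,
      Finset.sum_boole, Nat.cast_pow]
  rw [hsum] at hre
  set ν : ℝ := (((Finset.range (L + 1 - k)).filter fun j => (a / g ^ j) % g ^ k = s).card : ℝ)
  have hkpos : (0:ℝ) < k := by exact_mod_cast hk
  have hLpos : (0:ℝ) < L := by exact_mod_cast (by omega : 0 < L)
  have habs : |ν - ((L + 1 - k : ℕ) : ℝ) * (1 / (g:ℝ) ^ k)| ≤ k * (η * L) := by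
    rw [hre]
    refine (Finset.abs_sum_le_sum_abs _ _).trans ?_
    have : ∀ r ∈ Finset.range k,
        |∑ i ∈ Finset.range ((L - r) / k), ceY (g ^ k) s ((a / g ^ (r + k * i)) % g ^ k)|
          ≤ η * L := by
      intro r hr
      have h := hcon r (Finset.mem_range.1 hr)
      have h1 := h 1 (by simp)
      have h2 := h (-1) (by simp)
      simp only [ceS] at h1 h2
      rw [abs_le]
      constructor <;> linarith
    refine (Finset.sum_le_sum this).trans ?_
    simp
  have hkη : k * (η * L) ≤ ε * L / 2 := by
    have : η * (2 * k) ≤ ε := by rwa [le_div_iff₀ (by positivity)] at hη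
    nlinarith
  have hq0 : 0 < 1 / (g:ℝ) ^ k := by positivity
  have hq1 : 1 / (g:ℝ) ^ k ≤ 1 := by
    rw [div_le_one (by positivity)]
    exact one_le_pow₀ (by exact_mod_cast (by omega : 1 ≤ g))
  set q := 1 / (g:ℝ) ^ k
  have hcast : ((L + 1 - k : ℕ) : ℝ) = L + 1 - k := by
    rw [Nat.cast_sub (by omega)]; push_cast; ring
  rw [hcast] at habs
  have hk1 : (1:ℝ) ≤ k := by exact_mod_cast hk
  have hfin : |ν - L * q| ≤ ε * L := by
    rw [abs_le] at habs ⊢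
    have h3 : 0 ≤ (k - 1 : ℝ) * q := mul_nonneg (by linarith) hq0.le
    have h4 : (k - 1 : ℝ) * q ≤ k := by nlinarith
    constructor <;> nlinarith
  have : ν / L - q = (ν - L * q) / L := by field_simp
  rw [this, abs_div, abs_of_pos hLpos, div_le_iff₀ hLpos]
  exact hfin

open scoped Classical in
lemma ce_count (g k : ℕ) (hg : 2 ≤ g) (hk : 1 ≤ k) (ε η : ℝ) (hη0 : 0 < η) (hη1 : η ≤ 1)
    (hη : η ≤ ε / (2 * k)) (L L0 : ℕ) (hkL : k ≤ L0) (hεL : 2 * k ≤ ε * L0) (hε : 0 < ε) :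
    (((Finset.range (g ^ L)).filter fun a => 1 ≤ a ∧ Lg g a = L ∧ ¬ EKNormalInt g ε k a).card : ℝ)
      ≤ (2 * k * (g:ℝ) ^ k + Real.exp (η ^ 2 / 4 * L0)) * (g * Real.exp (-(η ^ 2 / 4))) ^ L := by
  have hρ : ((g:ℝ) * Real.exp (-(η ^ 2 / 4))) ^ L = (g:ℝ) ^ L * Real.exp (-(η ^ 2 / 4) * L) := by
    rw [mul_pow, ← Real.exp_nat_mul, mul_comm (L:ℝ)]
  rw [hρ]
  set X := (g:ℝ) ^ L * Real.exp (-(η ^ 2 / 4) * L) with hX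
  have hX0 : 0 < X := by
    have : (0:ℝ) < g := by exact_mod_cast (by omega : 0 < g)
    positivity
  rcases lt_or_ge L L0 with h | h
  · calc _ ≤ ((Finset.range (g ^ L)).card : ℝ) := by
          exact_mod_cast Finset.card_filter_le _ _
      _ = (g:ℝ) ^ L := by simp
      _ ≤ Real.exp (η ^ 2 / 4 * L0) * X := by
          rw [hX, mul_left_comm, ← Real.exp_add]
          have : (L:ℝ) ≤ L0 := by exact_mod_cast h.le
          refine le_mul_of_one_le_right (by positivity) (Real.one_le_exp ?_)
          nlinarith [sq_nonneg η]
      _ ≤ _ := by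
          gcongr
          have : (0:ℝ) ≤ 2 * k * (g:ℝ) ^ k := by positivity
          linarith
  · have hsub : ((Finset.range (g ^ L)).filter
          fun a => 1 ≤ a ∧ Lg g a = L ∧ ¬ EKNormalInt g ε k a) ⊆
        (Finset.range (g ^ k) ×ˢ (Finset.range k ×ˢ ({1, -1} : Finset ℝ))).biUnion
          fun p => (Finset.range (g ^ L)).filter
            fun a => η * L ≤ p.2.2 * ceS g k p.1 p.2.1 ((L - p.2.1) / k) a := by
      intro a ha
      obtain ⟨ha1, ha2, ha3, ha4⟩ := Finset.mem_filter.1 ha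
      have hLL : (L0:ℝ) ≤ L := by exact_mod_cast h
      obtain ⟨s, hs, r, hr, θ, hθ, hfin⟩ := ce_bad g k a hg hk ha2 ε η hη (by omega)
        (by rw [ha3]; nlinarith) ha4
      rw [ha3] at hfin
      refine Finset.mem_biUnion.2 ⟨(s, r, θ), ?_, Finset.mem_filter.2 ⟨ha1, hfin⟩⟩
      simp only [Finset.mem_product, Finset.mem_range]
      exact ⟨hs, hr, hθ⟩
    have h1 := (Finset.card_le_card hsub).trans Finset.card_biUnion_le
    have h2 : ∀ p ∈ Finset.range (g ^ k) ×ˢ (Finset.range k ×ˢ ({1, -1} : Finset ℝ)),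
        (((Finset.range (g ^ L)).filter
            fun a => η * L ≤ p.2.2 * ceS g k p.1 p.2.1 ((L - p.2.1) / k) a).card : ℝ) ≤ X := by
      rintro ⟨s, r, θ⟩ hp
      simp only [Finset.mem_product, Finset.mem_range, Finset.mem_insert,
        Finset.mem_singleton] at hp
      obtain ⟨hs, hr, hθ⟩ := hp
      refine ce_chernoff g k s r ((L - r) / k) L hg hs ?_ hk θ η hη0 hη1 hθ
      have := Nat.mul_div_le (L - r) k
      omega
    have h3 : (({1, -1} : Finset ℝ)).card = 2 := by
      rw [Finset.card_pair]; norm_num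
    calc _ ≤ ∑ p ∈ Finset.range (g ^ k) ×ˢ (Finset.range k ×ˢ ({1, -1} : Finset ℝ)),
          (((Finset.range (g ^ L)).filter
            fun a => η * L ≤ p.2.2 * ceS g k p.1 p.2.1 ((L - p.2.1) / k) a).card : ℝ) := by
            exact_mod_cast h1
      _ ≤ _ := Finset.sum_le_sum h2
      _ = 2 * k * (g:ℝ) ^ k * X := by
            rw [Finset.sum_const, Finset.card_product, Finset.card_product, h3]
            rw [Finset.card_range, Finset.card_range, nsmul_eq_mul]; push_cast; ring
      _ ≤ _ := by
            gcongr
            have := Real.exp_pos (η ^ 2 / 4 * L0)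
            linarith

open scoped Classical in
theorem copeland_erdos_integer_count (g : ℕ) (hg : 2 ≤ g) (ε : ℝ) (hε : 0 < ε) (k : ℕ) :
    ∃ δ : ℝ, 0 < δ ∧ ∀ᶠ m : ℕ in atTop,
      (((Finset.Icc 1 m).filter fun a => ¬ EKNormalInt g ε k a).card : ℝ)
        ≤ (m : ℝ) ^ (1 - δ) := by
  rcases Nat.eq_zero_or_pos k with rfl | hk
  · refine ⟨1, one_pos, Filter.Eventually.of_forall fun m => ?_⟩
    have : ((Finset.Icc 1 m).filter fun a => ¬ EKNormalInt g ε 0 a) = ∅ := by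
      refine Finset.filter_eq_empty_iff.2 fun a ha => ?_
      rw [not_not]
      intro σ hσ _
      have ha := (Finset.mem_Icc.1 ha).1
      have hDlen : (Nat.digits g a).length = Lg g a := Nat.digits_len g a (by omega) (by omega)
      have hpos : (0:ℝ) < Lg g a := by
        have : 0 < Lg g a := Nat.succ_pos _
        exact_mod_cast this
      rw [List.length_eq_zero_iff] at hσ
      subst hσ
      have : nu (digs g a) [] = Lg g a := by
        simp [nu, digs, hDlen]
      rw [this, div_self hpos.ne']
      simpa using hε.le
    rw [this]
    simp
  have hkR : (0:ℝ) < k := by exact_mod_cast hk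
  set η : ℝ := min (ε / (2 * k)) 1 with hηd
  have hη0 : 0 < η := lt_min (by positivity) one_pos
  have hη1 : η ≤ 1 := min_le_right _ _
  have hη : η ≤ ε / (2 * k) := min_le_left _ _
  obtain ⟨n0, hn0⟩ := exists_nat_ge (2 * k / ε)
  set L0 := max n0 k with hL0
  have hεL : 2 * k ≤ ε * L0 := by
    rw [div_le_iff₀ hε] at hn0
    have : (n0:ℝ) ≤ L0 := by exact_mod_cast le_max_left n0 k
    nlinarith
  have hgR : (2:ℝ) ≤ g := by exact_mod_cast hg
  have hlogg : 1 / 2 < Real.log g := by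
    have h1 := Real.log_two_gt_d9
    have h2 := Real.log_le_log (by norm_num) hgR
    linarith
  set c : ℝ := η ^ 2 / 4 with hc
  have hc0 : 0 < c := by positivity
  have hc1 : c ≤ 1 / 4 := by nlinarith
  set C : ℝ := 2 * k * (g:ℝ) ^ k + Real.exp (c * L0) with hC
  have hC0 : 0 < C := by positivity
  set ρ : ℝ := g * Real.exp (-c) with hρ
  have hρg : ρ = Real.exp (Real.log g - c) := by
    rw [sub_eq_add_neg, Real.exp_add, Real.exp_log (by linarith)]
  have hρ1 : 1 ≤ ρ := by rw [hρg]; exact Real.one_le_exp (by linarith)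
  set δ : ℝ := c / (2 * Real.log g) with hδ
  have hδ0 : 0 < δ := by
    have : 0 < Real.log g := by linarith
    positivity
  refine ⟨δ, hδ0, ?_⟩
  have hasym : ∀ᶠ x : ℝ in atTop, C * ρ * (Real.log x / Real.log g + 3) ≤ x ^ δ := by
    have h1 := (isLittleO_log_rpow_atTop hδ0).const_mul_left (C * ρ / Real.log g)
    have h2 : (fun _ : ℝ => C * ρ * 3) =o[atTop] fun x : ℝ => x ^ δ := by
      rw [Asymptotics.isLittleO_const_left]
      right
      exact tendsto_norm_atTop_atTop.comp (tendsto_rpow_atTop hδ0)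
    have h3 := (h1.add h2).bound (one_pos)
    filter_upwards [h3, eventually_ge_atTop 1] with x hx hx1
    rw [one_mul, Real.norm_eq_abs, Real.norm_eq_abs,
      abs_of_nonneg (Real.rpow_nonneg (by linarith) _)] at hx
    refine le_trans (le_of_eq ?_) ((le_abs_self _).trans hx)
    ring
  have hasymN := tendsto_natCast_atTop_atTop.eventually hasym
  filter_upwards [hasymN, eventually_ge_atTop 1] with m hm hm1
  have hmR : (1:ℝ) ≤ m := by exact_mod_cast hm1
  set N := Nat.log g m with hN
  have hsub : ((Finset.Icc 1 m).filter fun a => ¬ EKNormalInt g ε k a) ⊆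
      (Finset.range (N + 2)).biUnion fun L => (Finset.range (g ^ L)).filter
        fun a => 1 ≤ a ∧ Lg g a = L ∧ ¬ EKNormalInt g ε k a := by
    intro a ha
    obtain ⟨h1, h2⟩ := Finset.mem_filter.1 ha
    obtain ⟨h3, h4⟩ := Finset.mem_Icc.1 h1
    refine Finset.mem_biUnion.2 ⟨Lg g a, ?_, Finset.mem_filter.2 ⟨?_, h3, rfl, h2⟩⟩
    · rw [Finset.mem_range, Lg]
      have := Nat.log_mono_right (b := g) h4
      omega
    · rw [Finset.mem_range]
      exact Nat.lt_pow_succ_log_self (by omega) a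
  have h1 := (Finset.card_le_card hsub).trans Finset.card_biUnion_le
  have hNlog : (N:ℝ) ≤ Real.log m / Real.log g := by
    rw [le_div_iff₀ (by linarith), ← Real.log_pow]
    apply Real.log_le_log (by positivity)
    exact_mod_cast Nat.pow_log_le_self g (by omega)
  have hρN : ρ ^ N ≤ (m:ℝ) ^ (1 - 2 * δ) := by
    rw [hρg, ← Real.exp_nat_mul, Real.rpow_def_of_pos (by linarith)]
    apply Real.exp_le_exp.2
    have e : 1 - 2 * δ = (Real.log g - c) / Real.log g := by
      rw [hδ]
      have : Real.log g ≠ 0 := by linarith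
      field_simp
    rw [e]
    calc _ ≤ Real.log m / Real.log g * (Real.log g - c) := by
          apply mul_le_mul_of_nonneg_right hNlog; linarith
      _ = _ := by ring
  calc _ ≤ ∑ L ∈ Finset.range (N + 2), (((Finset.range (g ^ L)).filter
        fun a => 1 ≤ a ∧ Lg g a = L ∧ ¬ EKNormalInt g ε k a).card : ℝ) := by exact_mod_cast h1
    _ ≤ ∑ L ∈ Finset.range (N + 2), C * ρ ^ (N + 1) := by
        refine Finset.sum_le_sum fun L hL => ?_
        refine (ce_count g k hg hk ε η hη0 hη1 hη L L0 (le_max_right _ _) hεL hε).trans ?_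
        have : L ≤ N + 1 := by have := Finset.mem_range.1 hL; omega
        exact mul_le_mul_of_nonneg_left (pow_le_pow_right₀ hρ1 this) hC0.le
    _ = C * ρ * (N + 2) * ρ ^ N := by
        rw [Finset.sum_const, Finset.card_range, nsmul_eq_mul, pow_succ]; push_cast; ring
    _ ≤ C * ρ * (Real.log m / Real.log g + 3) * (m:ℝ) ^ (1 - 2 * δ) := by
        have hρ0 : 0 < ρ := by linarith
        have : (N:ℝ) + 2 ≤ Real.log m / Real.log g + 3 := by linarith
        gcongr
    _ ≤ (m:ℝ) ^ δ * (m:ℝ) ^ (1 - 2 * δ) := by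
        gcongr
    _ = (m:ℝ) ^ (1 - δ) := by
        rw [← Real.rpow_add (by linarith)]; congr 1; ring
end

section
/- Let g ≥ 2 be an integer base. The infinite base-g digit sequence obtained by concatenating the base-g expansions of the squares 1², 2², 3², 4², … in order (equivalently, the real number 0.\bar{1}\bar{4}\bar{9}\bar{16}\bar{25}… in base g) is normal to base g. -/
open Filter

/-- The `N`-th digit (indexed from `0`) of the infinite base-`g` digit sequence obtained by
concatenating the digit strings of `a 1`, `a 2`, `a 3`, … . -/
def concatDigit (g : ℕ) (a : ℕ → ℕ) (N : ℕ) : ℕ :=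
  (((List.range (N + 1)).map (fun n => digs g (a (n + 1)))).flatten).getD N 0

/-- An infinite sequence `x` of base-`g` digits is normal to base `g` if for every nonempty
string `σ` of base-`g` digits, the frequency of occurrences of `σ` among the first `N` digits
tends to `g^{-|σ|}`. -/
def IsNormalSeq (g : ℕ) (x : ℕ → ℕ) : Prop :=
  ∀ σ : List ℕ, σ ≠ [] → (∀ d ∈ σ, d < g) →
    Tendsto (fun N : ℕ => (nu ((List.range N).map x) σ : ℝ) / (N : ℝ)) atTop
      (nhds (1 / (g : ℝ) ^ σ.length))


lemma bsn_sparse (S : Finset ℕ) (u d t : ℕ) (hd : 0 < d)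
    (h1 : ∀ b ∈ S, u ≤ b ∧ b < u + d * t)
    (h2 : ∀ b ∈ S, ∀ b' ∈ S, b ≡ b' [MOD d]) : S.card ≤ t := by
  have : S.card ≤ (Finset.range t).card := by
    apply Finset.card_le_card_of_injOn (fun b => (b - u) / d)
    · intro b hb
      have := h1 b hb
      simp only [Finset.coe_range, Set.mem_Iio]
      rw [Nat.div_lt_iff_lt_mul hd, mul_comm]
      omega
    · intro b hb b' hb' h
      have e1 := h1 b hb
      have e2 := h1 b' hb'
      have e3 := h2 b hb b' hb'
      simp only at h
      have e4 : (b - u) ≡ (b' - u) [MOD d] := by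
        apply Nat.ModEq.add_right_cancel' u
        rwa [Nat.sub_add_cancel e1.1, Nat.sub_add_cancel e2.1]
      have e5 : (b - u) % d = (b' - u) % d := e4
      have := Nat.div_add_mod (b - u) d
      have := Nat.div_add_mod (b' - u) d
      rw [h, e5] at *
      omega
  simpa using this

lemma bsn_lin (x y Q z l : ℕ) (hQ : 0 < Q) :
    ((Finset.range Q).filter (fun b => z ≤ (x + y * b) % Q ∧ (x + y * b) % Q < z + l)).card
      ≤ l + Nat.gcd y Q := by
  set c := Nat.gcd y Q with hc
  have hc0 : 0 < c := Nat.gcd_pos_of_pos_right _ hQ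
  have hcQ : c ∣ Q := Nat.gcd_dvd_right _ _
  have hcy : c ∣ y := Nat.gcd_dvd_left _ _
  set S := (Finset.range Q).filter (fun b => z ≤ (x + y * b) % Q ∧ (x + y * b) % Q < z + l)
  have h1 : S.card ≤ c * (S.image (fun b => (x + y * b) % Q)).card := by
    apply Finset.card_le_mul_card_image
    intro w _
    apply bsn_sparse _ 0 (Q / c) c (Nat.div_pos (Nat.le_of_dvd hQ hcQ) hc0)
    · intro b hb
      simp only [S, Finset.mem_filter, Finset.mem_range] at hb
      rw [Nat.div_mul_cancel hcQ]
      omega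
    · intro b hb b' hb'
      simp only [Finset.mem_filter] at hb hb'
      have : x + y * b ≡ x + y * b' [MOD Q] := hb.2.trans hb'.2.symm
      have := Nat.ModEq.add_left_cancel' x this
      have := Nat.ModEq.cancel_left_div_gcd hQ this
      rwa [Nat.gcd_comm] at this
  have h2 : (S.image (fun b => (x + y * b) % Q)).card ≤ l / c + 1 := by
    apply bsn_sparse _ z c _ hc0
    · intro w hw
      simp only [S, Finset.mem_image, Finset.mem_filter] at hw
      obtain ⟨b, hb, rfl⟩ := hw
      have := Nat.lt_mul_div_succ l hc0
      omega
    · have key : ∀ w ∈ S.image (fun b => (x + y * b) % Q), w ≡ x [MOD c] := by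
        intro w hw
        simp only [Finset.mem_image] at hw
        obtain ⟨b, hb, rfl⟩ := hw
        have a1 : (x + y * b) % Q ≡ x + y * b [MOD c] := (Nat.mod_modEq _ _).of_dvd hcQ
        refine a1.trans ?_
        have : y * b ≡ 0 [MOD c] := (Nat.modEq_zero_iff_dvd).2 (hcy.mul_right b)
        simpa using this.add_left x
      intro b hb b' hb'
      exact (key b hb).trans (key b' hb').symm
  calc S.card ≤ c * (l / c + 1) := h1.trans (Nat.mul_le_mul_left _ h2)
    _ = c * (l / c) + c := by ring
    _ ≤ l + c := by have := Nat.mul_div_le l c; omega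

lemma bsn_tau (Q : ℕ) : Q.divisors.card ≤ 2 * (Nat.sqrt Q + 1) := by
  have : Q.divisors ⊆ Finset.range (Nat.sqrt Q + 1) ∪
      (Finset.range (Nat.sqrt Q + 1)).image (fun d => Q / d) := by
    intro d hd
    have h := Nat.mem_divisors.1 hd
    simp only [Finset.mem_union, Finset.mem_range, Finset.mem_image]
    by_cases h1 : d < Nat.sqrt Q + 1
    · exact Or.inl h1
    · right
      refine ⟨Q / d, ?_, Nat.div_div_self h.1 h.2⟩
      have h3 : Nat.sqrt Q + 1 ≤ d := by omega
      rw [Nat.div_lt_iff_lt_mul (by omega)]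
      calc Q < (Nat.sqrt Q + 1) * (Nat.sqrt Q + 1) := Nat.lt_succ_sqrt Q
        _ ≤ _ := Nat.mul_le_mul_left _ h3
  calc _ ≤ _ := Finset.card_le_card this
    _ ≤ _ := Finset.card_union_le _ _
    _ ≤ (Nat.sqrt Q + 1) + (Nat.sqrt Q + 1) := by
        gcongr
        · simp
        · exact Finset.card_image_le.trans (by simp)
    _ = _ := by ring

lemma bsn_gcdsum (Q M : ℕ) (hQ : 0 < Q) :
    ∑ n ∈ Finset.range M, Nat.gcd (2 * n) Q ≤ 2 * (Q.divisors.card * (M + Q)) := by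
  have h1 : ∀ n, Nat.gcd (2 * n) Q ≤ 2 * ∑ d ∈ Q.divisors, if d ∣ n then d else 0 := by
    intro n
    have a : Nat.gcd (2 * n) Q ≤ 2 * Nat.gcd n Q := by
      have : Nat.gcd (2 * n) Q ∣ Nat.gcd 2 Q * Nat.gcd n Q := Nat.gcd_mul_left_dvd_mul_gcd _ _ _
      have h2 := Nat.le_of_dvd (Nat.mul_pos (Nat.gcd_pos_of_pos_right _ hQ)
        (Nat.gcd_pos_of_pos_right _ hQ)) this
      exact h2.trans (Nat.mul_le_mul_right _ (Nat.gcd_le_left _ (by norm_num)))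
    refine a.trans (Nat.mul_le_mul_left _ ?_)
    have := Finset.single_le_sum (f := fun d => if d ∣ n then d else 0) (s := Q.divisors)
      (fun _ _ => Nat.zero_le _) (Nat.mem_divisors.2 ⟨Nat.gcd_dvd_right n Q, hQ.ne'⟩)
    simpa [Nat.gcd_dvd_left] using this
  calc _ ≤ ∑ n ∈ Finset.range M, 2 * ∑ d ∈ Q.divisors, (if d ∣ n then d else 0) :=
        Finset.sum_le_sum fun n _ => h1 n
    _ = 2 * ∑ d ∈ Q.divisors, ∑ n ∈ Finset.range M, (if d ∣ n then d else 0) := by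
        rw [← Finset.mul_sum, Finset.sum_comm]
    _ ≤ 2 * ∑ d ∈ Q.divisors, (M + Q) := by
        gcongr with d hd
        have hdQ := Nat.divisor_le hd
        have hd0 := Nat.pos_of_mem_divisors hd
        rw [← Finset.sum_filter, Finset.sum_const, smul_eq_mul]
        have : ((Finset.range M).filter (fun n => d ∣ n)).card ≤ M / d + 1 := by
          apply bsn_sparse _ 0 d _ hd0
          · intro b hb
            simp only [Finset.mem_filter, Finset.mem_range] at hb
            have := Nat.lt_mul_div_succ M hd0
            omega
          · intro b hb b' hb'
            simp only [Finset.mem_filter] at hb hb'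
            exact ((Nat.modEq_zero_iff_dvd).2 hb.2).trans ((Nat.modEq_zero_iff_dvd).2 hb'.2).symm
        calc _ ≤ (M / d + 1) * d := Nat.mul_le_mul_right _ this
          _ = M / d * d + d := by ring
          _ ≤ _ := by have := Nat.div_mul_le_self M d; omega
    _ = _ := by simp

/-- count -/
def bsnS (M q K s : ℕ) : ℕ := ((Finset.range M).filter (fun n => n ^ 2 / q % K = s)).card

lemma bsn_sumS (M q K : ℕ) (hK : 0 < K) : ∑ s ∈ Finset.range K, bsnS M q K s = M := by
  have := Finset.card_eq_sum_card_fiberwise (s := Finset.range M) (t := Finset.range K)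
    (f := fun n => n ^ 2 / q % K) (by intro n _; simpa using Nat.mod_lt _ hK)
  simpa [bsnS] using this.symm

/-- low range -/
lemma bsn_low (M P Q' K s : ℕ) (hQ' : 0 < Q') (hK : 0 < K) (hP : 0 < P)
    (hPP : P * Q' * K ∣ P ^ 2) :
    (Q' * K) * bsnS M (P * Q') K s ≤
      M * Q' + 2 * ((Q' * K).divisors.card * (M + Q' * K)) + (Q' * K) * (P * (Q' * K)) := by
  set Q := Q' * K with hQ
  have hQ0 : 0 < Q := Nat.mul_pos hQ' hK
  set F : ℕ → Prop := fun n => n ^ 2 / (P * Q') % K = s with hF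
  have h1 : ∀ b ∈ Finset.range Q, bsnS M (P * Q') K s ≤
      ((Finset.range M).filter (fun n => F (n + b * P))).card + P * Q := by
    intro b hb
    have hb' : b < Q := Finset.mem_range.1 hb
    have : (Finset.range M).filter F ⊆
        ((Finset.range M).filter (fun n => F (n + b * P))).image (fun n => n + b * P) ∪
          Finset.range (P * Q) := by
      intro n hn
      simp only [Finset.mem_filter, Finset.mem_range, Finset.mem_union, Finset.mem_image] at hn ⊢
      by_cases h : n < b * P
      · right
        have : b * P ≤ P * Q := by rw [mul_comm P]; exact Nat.mul_le_mul_right _ hb'.le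
        omega
      · left
        have e : n - b * P + b * P = n := by omega
        refine ⟨n - b * P, ⟨by omega, ?_⟩, e⟩
        rw [e]; exact hn.2
    refine (Finset.card_le_card this).trans ((Finset.card_union_le _ _).trans ?_)
    rw [Finset.card_range]
    exact Nat.add_le_add_right Finset.card_image_le _
  have h2 : ∀ n, ((Finset.range Q).filter (fun b => F (n + b * P))).card ≤
      Q' + Nat.gcd (2 * n) Q := by
    intro n
    refine le_trans (Finset.card_le_card ?_) (bsn_lin (n ^ 2 / P) (2 * n) Q (s * Q') Q' hQ0)
    intro b hb
    simp only [Finset.mem_filter, hF] at hb ⊢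
    refine ⟨hb.1, ?_⟩
    have e1 : (n + b * P) ^ 2 / (P * Q') % K = (n ^ 2 / P + 2 * n * b) % Q / Q' := by
      rw [← Nat.div_div_eq_div_mul, ← Nat.mod_mul_right_div_self]
      congr 1
      obtain ⟨e, he⟩ := hPP
      have he' : P = Q * e := by
        apply Nat.eq_of_mul_eq_mul_left hP
        rw [← sq, he, hQ]; ring
      have : (n + b * P) ^ 2 = n ^ 2 + P * (2 * n * b + Q * (e * b ^ 2)) := by
        calc (n + b * P) ^ 2 = n ^ 2 + P * (2 * n * b + P * b ^ 2) := by ring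
          _ = n ^ 2 + P * (2 * n * b + (Q * e) * b ^ 2) := by rw [← he']
          _ = _ := by ring
      rw [this, Nat.add_mul_div_left _ _ hP, ← hQ, ← add_assoc, Nat.add_mul_mod_self_left]
    rw [e1] at hb
    have h3 := (Nat.div_eq_iff hQ').1 hb.2
    constructor
    · exact h3.1
    · have := h3.2
      omega
  calc Q * bsnS M (P * Q') K s = ∑ b ∈ Finset.range Q, bsnS M (P * Q') K s := by simp
    _ ≤ ∑ b ∈ Finset.range Q, (((Finset.range M).filter (fun n => F (n + b * P))).card + P * Q) :=
        Finset.sum_le_sum h1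
    _ = ∑ n ∈ Finset.range M, ((Finset.range Q).filter (fun b => F (n + b * P))).card
          + Q * (P * Q) := by
        rw [Finset.sum_add_distrib]
        congr 1
        · simp only [Finset.card_filter]
          rw [Finset.sum_comm]
        · simp
    _ ≤ ∑ n ∈ Finset.range M, (Q' + Nat.gcd (2 * n) Q) + Q * (P * Q) := by
        gcongr with n hn; exact h2 n
    _ ≤ _ := by
        rw [Finset.sum_add_distrib]
        have := bsn_gcdsum Q M hQ0
        simp only [Finset.sum_const, Finset.card_range, smul_eq_mul]
        omega

lemma bsn_conc (M q u v : ℕ) (h : u < v) :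
    ((Finset.range M).filter (fun n => n ^ 2 / q = v)).card ≤
    ((Finset.range M).filter (fun n => n ^ 2 / q = u)).card + 1 := by
  rcases Nat.eq_zero_or_pos q with rfl | hq
  · have : (0:ℕ) ≠ v := by omega
    simp only [Nat.div_zero, this]
    simp
  set S := (Finset.range M).filter (fun n => n ^ 2 / q = v)
  rcases S.eq_empty_or_nonempty with hS | hS
  · simp [hS]
  set a := S.min' hS
  set z := S.max' hS
  have ha : a ∈ S := S.min'_mem hS
  have hz : z ∈ S := S.max'_mem hS
  have haz : a ≤ z := S.min'_le z hz
  obtain ⟨t, ht⟩ := Nat.exists_eq_add_of_le haz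
  have hcard : S.card ≤ t + 1 := by
    have : S ⊆ Finset.Icc a z := fun x hx => Finset.mem_Icc.2 ⟨S.min'_le x hx, S.le_max' x hx⟩
    have := Finset.card_le_card this
    rw [Nat.card_Icc] at this
    omega
  simp only [S, Finset.mem_filter, Finset.mem_range] at ha hz
  have ha2 := (Nat.div_eq_iff hq).1 ha.2
  have hz2 := (Nat.div_eq_iff hq).1 hz.2
  have huv : (u + 1) * q ≤ v * q := Nat.mul_le_mul_right _ h
  have huv2 : (u + 1) * q = u * q + q := by ring
  have hex : ∃ y, u * q ≤ y ^ 2 := ⟨a, by omega⟩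
  set y := Nat.find hex
  have hy : u * q ≤ y ^ 2 := Nat.find_spec hex
  have hya : y ≤ a := Nat.find_min' hex (by omega)
  have : (Finset.Ico y (y + t)) ⊆ (Finset.range M).filter (fun n => n ^ 2 / q = u) := by
    intro x hx
    rw [Finset.mem_Ico] at hx
    simp only [Finset.mem_filter, Finset.mem_range]
    refine ⟨by omega, ?_⟩
    rw [Nat.div_eq_iff hq]
    have h3 : u * q ≤ x ^ 2 := hy.trans (Nat.pow_le_pow_left hx.1 2)
    refine ⟨h3, ?_⟩
    have h4 : x ^ 2 < u * q + q := by
      have hd : (a + t) ^ 2 < a ^ 2 + q := by rw [← ht]; omega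
      rcases Nat.eq_zero_or_pos y with h0 | h0
      · have : x ^ 2 ≤ t ^ 2 := Nat.pow_le_pow_left (by omega) 2
        nlinarith
      · have hlt : (y - 1) ^ 2 < u * q := by
          have := Nat.find_min hex (show y - 1 < y by omega)
          omega
        obtain ⟨w, hw⟩ : ∃ w, y = w + 1 := ⟨y - 1, by omega⟩
        rw [hw] at hlt hx hya
        simp only [Nat.add_sub_cancel] at hlt
        have : x ^ 2 ≤ (w + t) ^ 2 := Nat.pow_le_pow_left (by omega) 2
        have : w * t ≤ a * t := Nat.mul_le_mul_right _ (by omega)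
        nlinarith
    omega
  have := Finset.card_le_card this
  rw [Nat.card_Ico] at this
  omega

lemma bsn_high (M q K s : ℕ) (hq : 0 < q) (hK : 0 < K) (hs : s < K) :
    K * bsnS M q K s ≤ M + K * (M ^ 2 / q + Nat.sqrt q + 3) := by
  set c : ℕ → ℕ := fun v => ((Finset.range M).filter (fun n => n ^ 2 / q = v)).card with hc
  set A := M ^ 2 / q + 1 with hA
  have hS : ∀ s < K, bsnS M q K s = ∑ a ∈ Finset.range A, c (a * K + s) := by
    intro s hs
    have := Finset.card_eq_sum_card_fiberwise
      (s := (Finset.range M).filter (fun n => n ^ 2 / q % K = s)) (t := Finset.range A)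
      (f := fun n => n ^ 2 / q / K) (by
        intro n hn
        simp only [Finset.coe_filter, Finset.mem_range, Set.mem_ofPred_eq] at hn
        simp only [Finset.coe_range, Set.mem_Iio, hA]
        have h1 : n ^ 2 / q ≤ M ^ 2 / q := Nat.div_le_div_right (Nat.pow_le_pow_left hn.1.le 2)
        have h2 := Nat.div_le_self (n ^ 2 / q) K
        omega)
    rw [bsnS, this]
    apply Finset.sum_congr rfl
    intro a _
    rw [hc, Finset.filter_filter]
    congr 1
    ext n
    simp only [Finset.mem_filter, Finset.mem_range, and_congr_right_iff]
    intro _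
    constructor
    · rintro ⟨h1, h2⟩
      have := Nat.div_add_mod' (n ^ 2 / q) K
      rw [h1, h2] at this
      omega
    · intro h
      rw [h]
      constructor
      · rw [Nat.mul_add_mod_self_right, Nat.mod_eq_of_lt hs]
      · rw [mul_comm, Nat.mul_add_div hK, Nat.div_eq_of_lt hs]; rfl
  have hconc : ∀ u v, u < v → c v ≤ c u + 1 := fun u v h => bsn_conc M q u v h
  have hc0 : c 0 ≤ Nat.sqrt q + 1 := by
    have : (Finset.range M).filter (fun n => n ^ 2 / q = 0) ⊆ Finset.range (Nat.sqrt q + 1) := by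
      intro n hn
      simp only [Finset.mem_filter, Finset.mem_range] at hn ⊢
      have h := (Nat.div_eq_zero_iff.1 hn.2).resolve_left hq.ne'
      have : n ≤ Nat.sqrt q := Nat.le_sqrt'.2 h.le
      omega
    have h2 := Finset.card_le_card this
    rwa [Finset.card_range] at h2
  have hcs : ∀ s, c s ≤ Nat.sqrt q + 2 := by
    intro s
    rcases Nat.eq_zero_or_pos s with rfl | h
    · omega
    · have := hconc 0 s h
      omega
  have hcmp : ∀ s' < K, bsnS M q K s ≤ bsnS M q K s' + (M ^ 2 / q + Nat.sqrt q + 3) := by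
    intro s' hs'
    rw [hS s hs, hS s' hs']
    calc ∑ a ∈ Finset.range A, c (a * K + s) ≤ ∑ a ∈ Finset.range (A + 1), c (a * K + s) :=
          Finset.sum_le_sum_of_subset (Finset.range_mono (by omega))
      _ = ∑ a ∈ Finset.range A, c ((a + 1) * K + s) + c (0 * K + s) := Finset.sum_range_succ' _ _
      _ ≤ ∑ a ∈ Finset.range A, (c (a * K + s') + 1) + (Nat.sqrt q + 2) := by
          gcongr with a _
          · apply hconc
            have : (a + 1) * K = a * K + K := by ring
            omega
          · exact hcs _
      _ = _ := by
          rw [Finset.sum_add_distrib]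
          simp only [Finset.sum_const, Finset.card_range, smul_eq_mul]
          omega
  calc K * bsnS M q K s = ∑ s' ∈ Finset.range K, bsnS M q K s := by simp
    _ ≤ ∑ s' ∈ Finset.range K, (bsnS M q K s' + (M ^ 2 / q + Nat.sqrt q + 3)) :=
        Finset.sum_le_sum fun s' h => hcmp s' (Finset.mem_range.1 h)
    _ = _ := by
        rw [Finset.sum_add_distrib, bsn_sumS M q K hK]; simp

lemma bsn_nu_digs (g a ℓ : ℕ) (hg : 2 ≤ g) (σ : List ℕ) (hσ : σ ≠ []) (hd : ∀ d ∈ σ, d < g)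
    (hℓ : (Nat.digits g a).length ≤ ℓ) :
    nu (digs g a) σ = ((Finset.range ℓ).filter (fun i => g ^ (i + σ.length - 1) ≤ a ∧
      a / g ^ i % g ^ σ.length = Nat.ofDigits g σ.reverse)).card := by
  have hk : 0 < σ.length := List.length_pos_iff.2 hσ
  set k := σ.length with hkdef
  set D := Nat.digits g a with hD
  have hlen : (digs g a).length = D.length := by simp [digs, hD]
  have hDlt : ∀ d ∈ D, d < g := fun d h => Nat.digits_lt_base hg h
  have hfit : ∀ p, p < D.length → σ <+: (digs g a).drop p → p + k ≤ D.length := by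
    intro p hp h
    have := h.length_le
    rw [List.length_drop, hlen] at this
    omega
  have hiff : ∀ i, g ^ (i + k - 1) ≤ a ↔ i + k ≤ D.length := by
    intro i
    rw [← Nat.lt_digits_length_iff hg, ← hD]
    omega
  have key : ∀ p i, p + i + k = D.length → (σ <+: (digs g a).drop p ↔
      a / g ^ i % g ^ k = Nat.ofDigits g σ.reverse) := by
    intro p i h
    have e1 : (List.take k ((digs g a).drop p)) = ((D.drop i).take k).reverse := by
      rw [digs, List.drop_reverse, List.take_reverse, List.drop_take, List.length_take]
      have h1 : min (D.length - p) D.length - k = i := by omega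
      have h2 : D.length - p - i = k := by omega
      rw [← hD, h1, h2]
    rw [List.prefix_iff_eq_take, ← hkdef, e1, Nat.self_div_pow_eq_ofDigits_drop i a hg,
      Nat.ofDigits_mod_pow_eq_ofDigits_take k (by omega) _
        (fun l hl => hDlt l (List.mem_of_mem_drop hl))]
    constructor
    · intro h; rw [h, List.reverse_reverse]
    · intro h3
      have := Nat.ofDigits_inj_of_len_eq (b := g) hg (by simp; omega)
        (fun l hl => hDlt l (List.mem_of_mem_drop (List.mem_of_mem_take hl)))
        (fun l hl => hd l (List.mem_reverse.1 hl)) h3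
      rw [this, List.reverse_reverse]
  unfold nu
  rw [hlen]
  apply Finset.card_nbij' (fun p => D.length - k - p) (fun p => D.length - k - p)
  · intro p hp
    simp only [Finset.coe_filter, Finset.mem_range, Set.mem_ofPred_eq] at hp ⊢
    have h1 := hfit p hp.1 hp.2
    refine ⟨by omega, (hiff _).2 (by omega), (key p _ (by omega)).1 hp.2⟩
  · intro p hp
    simp only [Finset.coe_filter, Finset.mem_range, Set.mem_ofPred_eq] at hp ⊢
    have h1 := (hiff _).1 hp.2.1
    refine ⟨by omega, (key _ p (by omega)).2 hp.2.2⟩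
  · intro p hp
    simp only [Finset.coe_filter, Finset.mem_range, Set.mem_ofPred_eq] at hp ⊢
    have h1 := hfit p hp.1 hp.2
    omega
  · intro p hp
    simp only [Finset.coe_filter, Finset.mem_range, Set.mem_ofPred_eq] at hp ⊢
    have h1 := (hiff _).1 hp.2.1
    omega

lemma bsn_len_digs (g a ℓ : ℕ) (hg : 2 ≤ g) (hℓ : (Nat.digits g a).length ≤ ℓ) :
    (Nat.digits g a).length = ((Finset.range ℓ).filter (fun i => g ^ i ≤ a)).card := by
  have : (Finset.range ℓ).filter (fun i => g ^ i ≤ a) =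
      Finset.range (Nat.digits g a).length := by
    ext i
    simp only [Finset.mem_filter, Finset.mem_range, ← Nat.lt_digits_length_iff hg]
    omega
  rw [this, Finset.card_range]

lemma bsn_nu_split (u v σ : List ℕ) : nu (u ++ v) σ =
    ((Finset.range u.length).filter (fun i => σ <+: (u ++ v).drop i)).card + nu v σ := by
  unfold nu
  simp only [Finset.card_filter, List.length_append, Finset.sum_range_add]
  congr 1
  apply Finset.sum_congr rfl
  intro i _
  have : List.drop (u.length + i) (u ++ v) = List.drop i v := by
    simp [List.drop_append]
  rw [this]

lemma bsn_nu_append_ge (u v σ : List ℕ) : nu u σ + nu v σ ≤ nu (u ++ v) σ := by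
  rw [bsn_nu_split]
  apply Nat.add_le_add_right
  apply Finset.card_le_card
  intro i hi
  simp only [Finset.mem_filter, Finset.mem_range] at hi ⊢
  refine ⟨hi.1, hi.2.trans ?_⟩
  rw [List.drop_append_of_le_length hi.1.le]
  exact List.prefix_append _ _

lemma bsn_nu_append_le (u v σ : List ℕ) : nu (u ++ v) σ ≤ nu u σ + nu v σ + σ.length := by
  rw [bsn_nu_split]
  have : (Finset.range u.length).filter (fun i => σ <+: (u ++ v).drop i) ⊆
      (Finset.range u.length).filter (fun i => σ <+: u.drop i) ∪
        Finset.Ico (u.length - σ.length) u.length := by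
    intro i hi
    simp only [Finset.mem_filter, Finset.mem_range, Finset.mem_union, Finset.mem_Ico] at hi ⊢
    by_cases h : i + σ.length ≤ u.length
    · left
      refine ⟨hi.1, ?_⟩
      have h2 := hi.2
      rw [List.drop_append_of_le_length hi.1.le] at h2
      apply List.prefix_of_prefix_length_le h2 (List.prefix_append _ _)
      rw [List.length_drop]; omega
    · right; omega
  have h2 := (Finset.card_le_card this).trans (Finset.card_union_le _ _)
  rw [Nat.card_Ico] at h2
  have : nu u σ = ((Finset.range u.length).filter (fun i => σ <+: u.drop i)).card := rfl
  omega

lemma bsn_nu_prefix (u w σ : List ℕ) (h : u <+: w) : nu u σ ≤ nu w σ := by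
  obtain ⟨v, rfl⟩ := h
  have := bsn_nu_append_ge u v σ
  omega

/-- concatenation -/
def bsnW (g M : ℕ) : List ℕ := ((List.range M).map (fun n => digs g (n ^ 2))).flatten

/-- total length -/
def bsnT (g M : ℕ) : ℕ := ∑ n ∈ Finset.range M, (Nat.digits g (n ^ 2)).length

/-- total inner count -/
def bsnV (g : ℕ) (σ : List ℕ) (M : ℕ) : ℕ := ∑ n ∈ Finset.range M, nu (digs g (n ^ 2)) σ

lemma bsnW_succ (g M : ℕ) : bsnW g (M + 1) = bsnW g M ++ digs g (M ^ 2) := by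
  simp [bsnW, List.range_succ]

lemma bsnW_len (g M : ℕ) : (bsnW g M).length = bsnT g M := by
  induction M with
  | zero => simp [bsnW, bsnT]
  | succ M ih =>
    rw [bsnW_succ, List.length_append, ih, bsnT, bsnT, Finset.sum_range_succ]
    simp [digs]

lemma bsnW_prefix (g M M' : ℕ) (h : M ≤ M') : bsnW g M <+: bsnW g M' := by
  induction M', h using Nat.le_induction with
  | base => exact List.prefix_rfl
  | succ n _ ih => rw [bsnW_succ]; exact ih.trans (List.prefix_append _ _)

lemma bsn_nuW (g M : ℕ) (σ : List ℕ) :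
    bsnV g σ M ≤ nu (bsnW g M) σ ∧ nu (bsnW g M) σ ≤ bsnV g σ M + M * σ.length := by
  induction M with
  | zero => simp [bsnW, bsnV, nu]
  | succ M ih =>
    rw [bsnW_succ, bsnV, Finset.sum_range_succ, ← bsnV]
    have h1 := bsn_nu_append_ge (bsnW g M) (digs g (M ^ 2)) σ
    have h2 := bsn_nu_append_le (bsnW g M) (digs g (M ^ 2)) σ
    have : (M + 1) * σ.length = M * σ.length + σ.length := by ring
    omega

lemma bsn_concat (g N : ℕ) : concatDigit g (fun n => n ^ 2) N = (bsnW g (N + 2)).getD N 0 := by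
  unfold concatDigit bsnW
  congr 1
  rw [List.range_succ_eq_map (n := N + 1)]
  simp [digs, List.map_map, Function.comp_def]

lemma bsnT_ge (g N : ℕ) (hg : 2 ≤ g) : N ≤ bsnT g (N + 1) := by
  induction N with
  | zero => simp
  | succ N ih =>
    rw [bsnT, Finset.sum_range_succ, ← bsnT]
    have : 0 < (Nat.digits g ((N + 1) ^ 2)).length := by
      rw [Nat.lt_digits_length_iff hg]; simp
      exact Nat.one_le_pow _ _ (by omega)
    omega

lemma bsn_seq_prefix (g N M : ℕ) (hg : 2 ≤ g) :
    (N ≤ bsnT g M → (List.range N).map (concatDigit g (fun n => n ^ 2)) <+: bsnW g M) ∧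
    (bsnT g M ≤ N → bsnW g M <+: (List.range N).map (concatDigit g (fun n => n ^ 2))) := by
  have hbig : (List.range N).map (concatDigit g (fun n => n ^ 2)) <+: bsnW g (M + N + 2) := by
    rw [List.prefix_iff_getElem?]
    intro i hi
    simp only [List.length_map, List.length_range] at hi
    simp only [List.getElem_map, List.getElem_range]
    rw [bsn_concat]
    have h1 : i < (bsnW g (i + 2)).length := by
      rw [bsnW_len]; have : i + 1 ≤ bsnT g (i + 2) := bsnT_ge g (i + 1) hg
      omega
    have h2 := bsnW_prefix g (i + 2) (M + N + 2) (by omega)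
    rw [List.prefix_iff_getElem?] at h2
    rw [h2 i h1, List.getD_eq_getElem _ _ h1]
  have hM := bsnW_prefix g M (M + N + 2) (by omega)
  constructor
  · intro h
    apply List.prefix_of_prefix_length_le hbig hM
    rw [bsnW_len]; simpa using h
  · intro h
    apply List.prefix_of_prefix_length_le hM hbig
    rw [bsnW_len]; simpa using h

/-- exchange -/
def bsnA (g k s M i : ℕ) : ℕ := ((Finset.range M).filter (fun n => g ^ (i + k - 1) ≤ n ^ 2 ∧
      n ^ 2 / g ^ i % g ^ k = s)).card

def bsnB (g M i : ℕ) : ℕ := ((Finset.range M).filter (fun n => g ^ i ≤ n ^ 2)).card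

lemma bsn_len_le (g M t n : ℕ) (hg : 2 ≤ g) (hM : M < g ^ (t + 1)) (hn : n ≤ M) :
    (Nat.digits g (n ^ 2)).length ≤ 2 * t + 2 := by
  rw [Nat.digits_length_le_iff hg]
  calc n ^ 2 < (g ^ (t + 1)) ^ 2 := Nat.pow_lt_pow_left (by omega) (by norm_num)
    _ = _ := by rw [← pow_mul]; congr 1; ring

lemma bsn_V_eq (g M t : ℕ) (hg : 2 ≤ g) (hM : M < g ^ (t + 1)) (σ : List ℕ) (hσ : σ ≠ [])
    (hd : ∀ d ∈ σ, d < g) :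
    bsnV g σ M = ∑ i ∈ Finset.range (2 * t + 2),
      bsnA g σ.length (Nat.ofDigits g σ.reverse) M i := by
  unfold bsnV bsnA
  rw [Finset.sum_congr rfl (fun n hn => bsn_nu_digs g (n ^ 2) (2 * t + 2) hg σ hσ hd
    (bsn_len_le g M t n hg hM (Finset.mem_range.1 hn).le))]
  simp only [Finset.card_filter]
  rw [Finset.sum_comm]

lemma bsn_T_eq (g M t : ℕ) (hg : 2 ≤ g) (hM : M < g ^ (t + 1)) :
    bsnT g M = ∑ i ∈ Finset.range (2 * t + 2), bsnB g M i := by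
  unfold bsnT bsnB
  rw [Finset.sum_congr rfl (fun n hn => bsn_len_digs g (n ^ 2) (2 * t + 2) hg
    (bsn_len_le g M t n hg hM (Finset.mem_range.1 hn).le))]
  simp only [Finset.card_filter]
  rw [Finset.sum_comm]

lemma bsn_up (g k e M t i s : ℕ) (hg : 2 ≤ g) (hke : k ≤ e) (he : 1 ≤ e)
    (ht : g ^ t ≤ M) (hM : M < g ^ (t + 1)) (hs : s < g ^ k)
    (hi : (4 * e ≤ i ∧ i + 4 * e ≤ t) ∨ (t + 4 * e ≤ i ∧ i + 4 * e ≤ 2 * t)) :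
    g ^ e * (g ^ k * bsnS M (g ^ i) (g ^ k) s) ≤ g ^ e * M + 17 * (g ^ k) ^ 2 * M := by
  have hg0 : 0 < g := by omega
  have hK1 : 1 ≤ g ^ k := Nat.one_le_pow _ _ hg0
  have hH1 : 1 ≤ g ^ e := Nat.one_le_pow _ _ hg0
  rcases hi with ⟨h1, h2⟩ | ⟨h1, h2⟩
  · have hlow := bsn_low M (g ^ (i + k - 2 * e)) (g ^ (2 * e - k)) (g ^ k) s (by positivity)
      (by positivity) (by positivity) (by
        rw [← pow_add, ← pow_add, ← pow_mul]
        apply pow_dvd_pow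
        omega)
    have e1 : g ^ (2 * e - k) * g ^ k = g ^ e * g ^ e := by
      rw [← pow_add, ← pow_add]; congr 1; omega
    have e2 : g ^ (i + k - 2 * e) * g ^ (2 * e - k) = g ^ i := by
      rw [← pow_add]; congr 1; omega
    have e3 : g ^ (i + k - 2 * e) * (g ^ e * g ^ e) = g ^ i * g ^ k := by
      rw [← pow_add, ← pow_add, ← pow_add]; congr 1; omega
    rw [e1, e2, e3] at hlow
    have htau := bsn_tau (g ^ e * g ^ e)
    rw [Nat.sqrt_eq] at htau
    have hQM : g ^ e * g ^ e ≤ M := by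
      refine le_trans ?_ ht
      rw [← pow_add]
      exact Nat.pow_le_pow_right hg0 (by omega)
    have hqM : g ^ i * g ^ e ≤ M := by
      refine le_trans ?_ ht
      rw [← pow_add]
      exact Nat.pow_le_pow_right hg0 (by omega)
    set H := g ^ e
    set K := g ^ k
    set S := bsnS M (g ^ i) K s
    set τ := (H * H).divisors.card
    set Q' := g ^ (2 * e - k)
    have hτ : τ * (M + H * H) ≤ (4 * H) * (2 * M) := Nat.mul_le_mul (by omega) (by omega)
    have hfin : H * (H * (K * S)) ≤ H * (H * M + 17 * K ^ 2 * M) := by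
      calc H * (H * (K * S)) = K * (H * H * S) := by ring
        _ ≤ K * (M * Q' + 2 * (τ * (M + H * H)) + H * H * (g ^ i * K)) :=
            Nat.mul_le_mul_left _ hlow
        _ ≤ K * (M * Q' + 2 * ((4 * H) * (2 * M)) + H * H * (g ^ i * K)) := by gcongr
        _ = M * (Q' * K) + 16 * K * H * M + H * K ^ 2 * (g ^ i * H) := by ring
        _ ≤ M * (H * H) + 16 * (K ^ 2) * H * M + H * K ^ 2 * M := by
            rw [e1]
            gcongr
            exact Nat.le_self_pow (by norm_num) K
        _ = _ := by ring
    exact Nat.le_of_mul_le_mul_left hfin (by omega)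
  · have hh := bsn_high M (g ^ i) (g ^ k) s (by positivity) (by positivity) hs
    have a1 : g ^ e * (M ^ 2 / g ^ i) ≤ M := by
      have : M ^ 2 * g ^ e ≤ M * g ^ i := by
        have : M * g ^ e ≤ g ^ i := by
          calc M * g ^ e ≤ g ^ (t + 1) * g ^ e := Nat.mul_le_mul_right _ hM.le
            _ = g ^ (t + 1 + e) := (pow_add _ _ _).symm
            _ ≤ g ^ i := Nat.pow_le_pow_right hg0 (by omega)
        calc M ^ 2 * g ^ e = M * (M * g ^ e) := by ring
          _ ≤ _ := Nat.mul_le_mul_left _ this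
      have h3 := Nat.mul_div_le_mul_div_assoc (g ^ e) (M ^ 2) (g ^ i)
      refine h3.trans ?_
      apply Nat.div_le_of_le_mul
      rw [mul_comm, mul_comm (g ^ i)]; exact this
    have a2 : g ^ e * Nat.sqrt (g ^ i) ≤ M := by
      have : Nat.sqrt (g ^ i) ≤ g ^ (t - 2 * e) := by
        calc Nat.sqrt (g ^ i) ≤ Nat.sqrt ((g ^ (t - 2 * e)) ^ 2) := by
              apply Nat.sqrt_le_sqrt
              rw [← pow_mul]
              exact Nat.pow_le_pow_right hg0 (by omega)
          _ = _ := Nat.sqrt_eq' _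
      calc _ ≤ g ^ e * g ^ (t - 2 * e) := Nat.mul_le_mul_left _ this
        _ = g ^ (e + (t - 2 * e)) := by rw [pow_add]
        _ ≤ g ^ t := Nat.pow_le_pow_right hg0 (by omega)
        _ ≤ M := ht
    have a3 : g ^ e ≤ M := (Nat.pow_le_pow_right hg0 (by omega)).trans ht
    calc g ^ e * (g ^ k * bsnS M (g ^ i) (g ^ k) s) ≤
        g ^ e * (M + g ^ k * (M ^ 2 / g ^ i + Nat.sqrt (g ^ i) + 3)) := Nat.mul_le_mul_left _ hh
      _ = g ^ e * M + g ^ k * (g ^ e * (M ^ 2 / g ^ i) + g ^ e * Nat.sqrt (g ^ i) + 3 * g ^ e) := by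
          ring
      _ ≤ g ^ e * M + (g ^ k) ^ 2 * (M + M + 3 * M) := by
          refine Nat.add_le_add_left (Nat.mul_le_mul (Nat.le_self_pow (by norm_num) _) ?_) _
          omega
      _ ≤ _ := by nlinarith [Nat.zero_le ((g ^ k) ^ 2 * M)]

lemma bsn_small (g k e M t i : ℕ) (hg : 2 ≤ g) (hke : k ≤ e) (ht : g ^ t ≤ M)
    (hi : i + 4 * e ≤ 2 * t) :
    g ^ e * ((Finset.range M).filter (fun n => n ^ 2 < g ^ (i + k))).card ≤ M := by
  have hg0 : 0 < g := by omega
  have : (Finset.range M).filter (fun n => n ^ 2 < g ^ (i + k)) ⊆ Finset.range (g ^ (t - e)) := by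
    intro n hn
    simp only [Finset.mem_filter, Finset.mem_range] at hn ⊢
    apply lt_of_pow_lt_pow_left₀ 2 (by positivity)
    refine hn.2.trans_le ?_
    rw [← pow_mul]
    exact Nat.pow_le_pow_right hg0 (by omega)
  have h := Finset.card_le_card this
  rw [Finset.card_range] at h
  calc _ ≤ g ^ e * g ^ (t - e) := Nat.mul_le_mul_left _ h
    _ = g ^ t := by rw [← pow_add]; congr 1; omega
    _ ≤ M := ht

lemma bsn_good (g k e M t i s : ℕ) (hg : 2 ≤ g) (hke : k ≤ e) (he : 1 ≤ e)
    (ht : g ^ t ≤ M) (hM : M < g ^ (t + 1)) (hs : s < g ^ k)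
    (hi : (4 * e ≤ i ∧ i + 4 * e ≤ t) ∨ (t + 4 * e ≤ i ∧ i + 4 * e ≤ 2 * t)) :
    (g : ℝ) ^ e * |(g : ℝ) ^ k * (bsnA g k s M i : ℝ) - (bsnB g M i : ℝ)| ≤
      18 * ((g : ℝ) ^ k) ^ 3 * M := by
  have hg0 : 0 < g := by omega
  have hup := fun s hs => bsn_up g k e M t i s hg hke he ht hM hs hi
  have hsum := bsn_sumS M (g ^ i) (g ^ k) (by positivity)
  have hsm := bsn_small g k e M t i hg hke ht (by omega)
  set Z := ((Finset.range M).filter (fun n => n ^ 2 < g ^ (i + k))).card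
  have hAS : bsnA g k s M i ≤ bsnS M (g ^ i) (g ^ k) s := by
    apply Finset.card_le_card
    intro n hn
    simp only [Finset.mem_filter] at hn ⊢
    exact ⟨hn.1, hn.2.2⟩
  have hSA : bsnS M (g ^ i) (g ^ k) s ≤ bsnA g k s M i + Z := by
    refine le_trans (Finset.card_le_card ?_) (Finset.card_union_le _ _)
    intro n hn
    simp only [Finset.mem_filter, Finset.mem_union] at hn ⊢
    by_cases h : g ^ (i + k - 1) ≤ n ^ 2
    · exact Or.inl ⟨hn.1, h, hn.2⟩
    · right
      refine ⟨hn.1, ?_⟩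
      have : g ^ (i + k - 1) ≤ g ^ (i + k) := Nat.pow_le_pow_right hg0 (by omega)
      omega
  have hBM : bsnB g M i ≤ M := by
    refine (Finset.card_le_card (Finset.filter_subset _ _)).trans (by simp)
  have hMB : M ≤ bsnB g M i + Z := by
    calc M = (Finset.range M).card := by simp
      _ ≤ _ := Finset.card_le_card ?_
      _ ≤ _ := Finset.card_union_le _ _
    intro n hn
    simp only [Finset.mem_filter, Finset.mem_union]
    by_cases h : g ^ i ≤ n ^ 2
    · exact Or.inl ⟨hn, h⟩
    · right
      refine ⟨hn, ?_⟩
      have : g ^ i ≤ g ^ (i + k) := Nat.pow_le_pow_right hg0 (by omega)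
      omega
  -- lower bound for S
  have hlow : g ^ e * g ^ k * M ≤ g ^ e * (g ^ k * bsnS M (g ^ i) (g ^ k) s) +
      (g ^ k - 1) * (g ^ e * M + 17 * (g ^ k) ^ 2 * M) := by
    have h1 : g ^ e * g ^ k * M =
        ∑ s' ∈ Finset.range (g ^ k), g ^ e * (g ^ k * bsnS M (g ^ i) (g ^ k) s') := by
      rw [← Finset.mul_sum, ← Finset.mul_sum, hsum, mul_assoc]
    rw [h1, ← Finset.add_sum_erase _ _ (Finset.mem_range.2 hs)]
    apply Nat.add_le_add_left
    refine (Finset.sum_le_card_nsmul _ _ (g ^ e * M + 17 * (g ^ k) ^ 2 * M) ?_).trans ?_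
    · intro s' hs'
      exact hup s' (Finset.mem_range.1 (Finset.mem_of_mem_erase hs'))
    · rw [Finset.card_erase_of_mem (Finset.mem_range.2 hs), Finset.card_range, smul_eq_mul]
  have hups := hup s hs
  have hK1 : 1 ≤ g ^ k := Nat.one_le_pow _ _ hg0
  have hH1 : 1 ≤ g ^ e := Nat.one_le_pow _ _ hg0
  have hK1R : (1 : ℝ) ≤ (g : ℝ) ^ k := by exact_mod_cast hK1
  have hH1R : (1 : ℝ) ≤ (g : ℝ) ^ e := by exact_mod_cast hH1
  rify [hK1] at hlow hups hsm hAS hSA hBM hMB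
  set H : ℝ := (g : ℝ) ^ e
  set K : ℝ := (g : ℝ) ^ k
  set A : ℝ := (bsnA g k s M i : ℝ)
  set B : ℝ := (bsnB g M i : ℝ)
  set S : ℝ := (bsnS M (g ^ i) (g ^ k) s : ℝ)
  have hH0 : 0 ≤ H := by linarith
  have hM0 : (0 : ℝ) ≤ M := Nat.cast_nonneg _
  have hK0 : 0 ≤ K := by linarith
  have habs : H * |K * A - B| = |H * (K * A - B)| := by rw [abs_mul, abs_of_nonneg hH0]
  rw [habs, abs_le]
  have hK2 : K ≤ K ^ 2 := by nlinarith
  have hK3 : K ^ 2 ≤ K ^ 3 := by nlinarith [sq_nonneg K]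
  have p1 : H * (K * A) ≤ H * (K * S) := by gcongr
  have p2 : H * (K * S) ≤ H * (K * A) + K * (H * Z) := by
    have : H * (K * S) ≤ H * (K * (A + Z)) := by gcongr
    linarith
  have p3 : K * (H * Z) ≤ K * M := by gcongr
  have p4 : H * M ≤ H * B + H * Z := by
    have : H * M ≤ H * (B + Z) := by gcongr
    linarith
  have p5 : H * B ≤ H * M := by gcongr
  have q1 : K * M ≤ K ^ 3 * M := by gcongr; linarith
  have q2 : K ^ 2 * M ≤ K ^ 3 * M := by gcongr
  have q3 : (M : ℝ) ≤ K ^ 3 * M := by nlinarith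
  have q4 : 0 ≤ K ^ 2 * M := by positivity
  constructor
  · nlinarith
  · nlinarith

lemma bsn_total (g e M t : ℕ) (σ : List ℕ) (hg : 2 ≤ g) (hσ : σ ≠ [])
    (hd : ∀ d ∈ σ, d < g) (hke : σ.length ≤ e) (ht : g ^ t ≤ M) (hM : M < g ^ (t + 1)) :
    |(g : ℝ) ^ σ.length * (bsnV g σ M : ℝ) - (bsnT g M : ℝ)| ≤
      (2 * t + 2) * (18 * ((g : ℝ) ^ σ.length) ^ 3 * M / (g : ℝ) ^ e) +
      (16 * e + 2) * ((g : ℝ) ^ σ.length * M) := by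
  have hg0 : 0 < g := by omega
  have hk : 0 < σ.length := List.length_pos_iff.2 hσ
  set k := σ.length with hkd
  set s := Nat.ofDigits g σ.reverse
  have hs : s < g ^ k := by
    have := Nat.ofDigits_lt_base_pow_length (b := g) (l := σ.reverse) hg
      (fun d h => hd d (List.mem_reverse.1 h))
    simpa using this
  have hgR : (0 : ℝ) < g := by exact_mod_cast hg0
  have hK1 : (1 : ℝ) ≤ (g : ℝ) ^ k := by exact_mod_cast Nat.one_le_pow k _ hg0
  set bad : Finset ℕ := (Finset.range (2 * t + 2)).filter (fun i =>
    ¬ ((4 * e ≤ i ∧ i + 4 * e ≤ t) ∨ (t + 4 * e ≤ i ∧ i + 4 * e ≤ 2 * t))) with hbad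
  have hbadc : bad.card ≤ 16 * e + 2 := by
    have : bad ⊆ Finset.range (4 * e) ∪ Finset.Ico (t - 4 * e) (t + 4 * e) ∪
        Finset.Ico (2 * t - 4 * e) (2 * t + 2) := by
      intro i hi
      simp only [hbad, Finset.mem_filter, Finset.mem_range, Finset.mem_union, Finset.mem_Ico] at hi ⊢
      omega
    have h1 := Finset.card_le_card this
    have h2 := Finset.card_union_le (Finset.range (4 * e) ∪ Finset.Ico (t - 4 * e) (t + 4 * e))
      (Finset.Ico (2 * t - 4 * e) (2 * t + 2))
    have h3 := Finset.card_union_le (Finset.range (4 * e)) (Finset.Ico (t - 4 * e) (t + 4 * e))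
    simp only [Finset.card_range, Nat.card_Ico] at h2 h3
    omega
  rw [bsn_V_eq g M t hg hM σ hσ hd, bsn_T_eq g M t hg hM]
  push_cast
  rw [Finset.mul_sum, ← Finset.sum_sub_distrib]
  refine (Finset.abs_sum_le_sum_abs _ _).trans ?_
  have hterm : ∀ i ∈ Finset.range (2 * t + 2),
      |(g : ℝ) ^ k * (bsnA g k s M i : ℝ) - (bsnB g M i : ℝ)| ≤
      18 * ((g : ℝ) ^ k) ^ 3 * M / (g : ℝ) ^ e +
        (if ¬ ((4 * e ≤ i ∧ i + 4 * e ≤ t) ∨ (t + 4 * e ≤ i ∧ i + 4 * e ≤ 2 * t)) then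
          (g : ℝ) ^ k * M else 0) := by
    intro i _
    split_ifs with h
    · have := bsn_good g k e M t i s hg hke (by omega) ht hM hs h
      rw [add_zero, le_div_iff₀ (by positivity), mul_comm]
      exact this
    · have hA : (bsnA g k s M i : ℝ) ≤ M := by
        exact_mod_cast (Finset.card_le_card (Finset.filter_subset _ _)).trans (by simp)
      have hB : (bsnB g M i : ℝ) ≤ M := by
        exact_mod_cast (Finset.card_le_card (Finset.filter_subset _ _)).trans (by simp)
      have hA0 : (0 : ℝ) ≤ (bsnA g k s M i : ℝ) := Nat.cast_nonneg _
      have hB0 : (0 : ℝ) ≤ (bsnB g M i : ℝ) := Nat.cast_nonneg _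
      have h1 : (g : ℝ) ^ k * (bsnA g k s M i : ℝ) ≤ (g : ℝ) ^ k * M := by gcongr
      have h2 : 0 ≤ (g : ℝ) ^ k * (bsnA g k s M i : ℝ) := by positivity
      have h3 : (M : ℝ) ≤ (g : ℝ) ^ k * M := le_mul_of_one_le_left (Nat.cast_nonneg _) hK1
      have h4 : 0 ≤ 18 * ((g : ℝ) ^ k) ^ 3 * M / (g : ℝ) ^ e := by positivity
      rw [abs_le]
      constructor <;> linarith
  refine (Finset.sum_le_sum hterm).trans ?_
  rw [Finset.sum_add_distrib, ← Finset.sum_filter, ← hbad]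
  simp only [Finset.sum_const, Finset.card_range, nsmul_eq_mul]
  have : (bad.card : ℝ) ≤ 16 * e + 2 := by exact_mod_cast hbadc
  push_cast
  gcongr

lemma bsn_T_low (g M t : ℕ) (hg : 2 ≤ g) (ht : g ^ t ≤ M) (hM : M < g ^ (t + 1)) (h1 : 1 ≤ t) :
    t * M ≤ 2 * bsnT g M := by
  have hB : ∀ i ∈ Finset.range t, M ≤ 2 * bsnB g M i := by
    intro i hi
    rw [Finset.mem_range] at hi
    have hh : 2 * g ^ (t - 1) ≤ M := by
      refine le_trans ?_ ht
      obtain ⟨u, rfl⟩ : ∃ u, t = u + 1 := ⟨t - 1, by omega⟩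
      rw [pow_succ, mul_comm, Nat.add_sub_cancel]
      exact Nat.mul_le_mul_left _ hg
    have : Finset.Ico (g ^ (t - 1)) M ⊆ (Finset.range M).filter (fun n => g ^ i ≤ n ^ 2) := by
      intro n hn
      simp only [Finset.mem_filter, Finset.mem_range, Finset.mem_Ico] at hn ⊢
      refine ⟨hn.2, ?_⟩
      calc g ^ i ≤ g ^ (t - 1) := Nat.pow_le_pow_right (by omega) (by omega)
        _ ≤ n := hn.1
        _ ≤ n ^ 2 := Nat.le_self_pow (by norm_num) n
    have := Finset.card_le_card this
    rw [Nat.card_Ico] at this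
    unfold bsnB
    omega
  rw [bsn_T_eq g M t hg hM]
  calc t * M = ∑ i ∈ Finset.range t, M := by simp
    _ ≤ ∑ i ∈ Finset.range t, 2 * bsnB g M i := Finset.sum_le_sum hB
    _ ≤ ∑ i ∈ Finset.range (2 * t + 2), 2 * bsnB g M i :=
        Finset.sum_le_sum_of_subset (Finset.range_mono (by omega))
    _ = _ := by rw [Finset.mul_sum]

lemma bsn_asymp (g : ℕ) (σ : List ℕ) (hg : 2 ≤ g) (hσ : σ ≠ [])
    (hd : ∀ d ∈ σ, d < g) (η : ℝ) (hη : 0 < η) :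
    ∃ M0 : ℕ, ∀ M ≥ M0,
      |(g : ℝ) ^ σ.length * (bsnV g σ M : ℝ) - (bsnT g M : ℝ)| ≤ η * bsnT g M ∧
      (g : ℝ) ^ σ.length * (M * σ.length) ≤ η * bsnT g M ∧
      ((Nat.digits g (M ^ 2)).length : ℝ) ≤ η * bsnT g M := by
  have hg0 : 0 < g := by omega
  have hgR : (1 : ℝ) < g := by exact_mod_cast hg
  set k := σ.length with hkd
  set K : ℝ := (g : ℝ) ^ k with hK
  have hK0 : 0 < K := by positivity
  obtain ⟨e0, he0⟩ := pow_unbounded_of_one_lt (288 * K ^ 3 / η) hgR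
  set e := max e0 k with he
  have hH : 288 * K ^ 3 ≤ η * (g : ℝ) ^ e := by
    have : (g : ℝ) ^ e0 ≤ (g : ℝ) ^ e := pow_le_pow_right₀ hgR.le (le_max_left _ _)
    rw [div_lt_iff₀ hη] at he0
    nlinarith
  obtain ⟨t0, ht0⟩ := exists_nat_ge (max (max 1 (4 * ((16 * e + 2) * K) / η)) (max (2 * K * k / η) (8 / η)))
  simp only [max_le_iff] at ht0
  obtain ⟨⟨b1, b2⟩, b3, b4⟩ := ht0
  refine ⟨g ^ t0, fun M hM0 => ?_⟩
  have hMpos : 0 < M := lt_of_lt_of_le (by positivity) hM0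
  set t := Nat.log g M with htd
  have ht : g ^ t ≤ M := Nat.pow_log_le_self g hMpos.ne'
  have hM : M < g ^ (t + 1) := Nat.lt_pow_succ_log_self hg M
  have htt : t0 ≤ t := Nat.le_log_of_pow_le hg hM0
  have ht1 : 1 ≤ t := le_trans (by exact_mod_cast b1) htt
  have hTl : (t : ℝ) * M ≤ 2 * bsnT g M := by exact_mod_cast bsn_T_low g M t hg ht hM ht1
  have htR : (t0 : ℝ) ≤ t := by exact_mod_cast htt
  have ht1R : (1 : ℝ) ≤ t := by exact_mod_cast ht1
  have hMR : (1 : ℝ) ≤ M := by exact_mod_cast hMpos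
  set T : ℝ := (bsnT g M : ℝ)
  rw [div_le_iff₀ hη] at b2 b3 b4
  have c2 : 4 * ((16 * e + 2) * K) ≤ t * η := b2.trans (by gcongr)
  have c3 : 2 * K * k ≤ t * η := b3.trans (by gcongr)
  have c4 : 8 ≤ t * η := b4.trans (by gcongr)
  refine ⟨?_, ?_, ?_⟩
  · refine (bsn_total g e M t σ hg hσ hd (le_max_right _ _) ht hM).trans ?_
    rw [← hkd, ← hK]
    have x1 : (2 * (t : ℝ) + 2) * (18 * K ^ 3 * M / (g : ℝ) ^ e) ≤ η / 2 * T := by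
      have hG : (0 : ℝ) < (g : ℝ) ^ e := by positivity
      have : 18 * K ^ 3 * M / (g : ℝ) ^ e ≤ η * M / 16 := by
        rw [div_le_iff₀ hG]
        nlinarith
      calc _ ≤ (4 * (t : ℝ)) * (η * M / 16) := by gcongr; linarith
        _ = η / 4 * (t * M) := by ring
        _ ≤ η / 4 * (2 * T) := by gcongr
        _ = _ := by ring
    have x2 : (16 * (e : ℝ) + 2) * (K * M) ≤ η / 2 * T := by
      calc _ = (4 * ((16 * e + 2) * K)) * M / 4 := by ring
        _ ≤ (t * η) * M / 4 := by gcongr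
        _ = η / 4 * (t * M) := by ring
        _ ≤ η / 4 * (2 * T) := by gcongr
        _ = _ := by ring
    linarith
  · calc K * (M * k) = (2 * K * k) * M / 2 := by ring
      _ ≤ (t * η) * M / 2 := by gcongr
      _ = η / 2 * (t * M) := by ring
      _ ≤ η / 2 * (2 * T) := by gcongr
      _ = _ := by ring
  · have h1 : ((Nat.digits g (M ^ 2)).length : ℝ) ≤ 2 * t + 2 := by
      exact_mod_cast bsn_len_le g M t M hg hM le_rfl
    have h2 : (t : ℝ) ≤ M := by
      exact_mod_cast (Nat.lt_pow_self hg).le.trans ht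
    have h3 : 8 ≤ M * η := c4.trans (by gcongr)
    calc _ ≤ 4 * (t : ℝ) := by linarith
      _ = 8 * t / 2 := by ring
      _ ≤ (M * η) * t / 2 := by gcongr
      _ = η / 2 * (t * M) := by ring
      _ ≤ η / 2 * (2 * T) := by gcongr
      _ = _ := by ring

/-- Besicovitch: the number `0.(1)(4)(9)(16)(25)…`, formed by concatenating the base-`g`
expansions of the squares, is normal to base `g`. -/
theorem besicovitch_squares_normal (g : ℕ) (hg : 2 ≤ g) :
    IsNormalSeq g (concatDigit g fun n => n ^ 2) := by
  intro σ hσ hd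
  have hg0 : 0 < g := by omega
  have hgR : (0 : ℝ) < g := by exact_mod_cast hg0
  have hK1 : (1 : ℝ) ≤ (g : ℝ) ^ σ.length := by exact_mod_cast Nat.one_le_pow _ _ hg0
  rw [Metric.tendsto_atTop]
  intro ε hε
  set η : ℝ := min (1 / 2) (ε / 6) with hη
  have hη0 : 0 < η := by positivity
  have hη1 : η ≤ 1 / 2 := min_le_left _ _
  have hη2 : η ≤ ε / 6 := min_le_right _ _
  obtain ⟨M0, hM0⟩ := bsn_asymp g σ hg hσ hd η hη0
  refine ⟨bsnT g M0 + 1, fun N hN => ?_⟩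
  have hmono : Monotone (bsnT g) := by
    intro a b h
    exact Finset.sum_le_sum_of_subset (Finset.range_mono h)
  have hex : ∃ M, N < bsnT g M := ⟨N + 2, by have : N + 1 ≤ bsnT g (N + 2) := bsnT_ge g (N + 1) hg
                                             omega⟩
  obtain ⟨M, hMle, hMlt, hMM⟩ : ∃ M, bsnT g M ≤ N ∧ N < bsnT g (M + 1) ∧ M0 ≤ M := by
    set M' := Nat.find hex
    have h1 : N < bsnT g M' := Nat.find_spec hex
    have h2 : M0 < M' := by
      by_contra h
      have := hmono (not_lt.1 h)
      omega
    refine ⟨M' - 1, ?_, ?_, by omega⟩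
    · have := Nat.find_min hex (show M' - 1 < M' by omega)
      omega
    · rwa [Nat.sub_add_cancel (by omega)]
  obtain ⟨a1, -, a3⟩ := hM0 M hMM
  obtain ⟨d1, d2, -⟩ := hM0 (M + 1) (by omega)
  have hlo : bsnV g σ M ≤ nu ((List.range N).map (concatDigit g fun n => n ^ 2)) σ :=
    (bsn_nuW g M σ).1.trans (bsn_nu_prefix _ _ σ ((bsn_seq_prefix g N M hg).2 hMle))
  have hhi : nu ((List.range N).map (concatDigit g fun n => n ^ 2)) σ ≤
      bsnV g σ (M + 1) + (M + 1) * σ.length :=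
    (bsn_nu_prefix _ _ σ ((bsn_seq_prefix g N (M + 1) hg).1 hMlt.le)).trans
      (bsn_nuW g (M + 1) σ).2
  have hTs : bsnT g (M + 1) = bsnT g M + (Nat.digits g (M ^ 2)).length := by
    rw [bsnT, Finset.sum_range_succ, ← bsnT]
  set ν := nu ((List.range N).map (concatDigit g fun n => n ^ 2)) σ
  have hNpos : 0 < N := by omega
  rify at hlo hhi hTs hMle hMlt hNpos
  push_cast at d2
  set K : ℝ := (g : ℝ) ^ σ.length
  set T : ℝ := (bsnT g M : ℝ)
  set T1 : ℝ := (bsnT g (M + 1) : ℝ)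
  set V : ℝ := (bsnV g σ M : ℝ)
  set V1 : ℝ := (bsnV g σ (M + 1) : ℝ)
  have hT0 : 0 ≤ T := Nat.cast_nonneg _
  rw [abs_le] at a1 d1
  have u1 : K * ν ≤ K * V1 + K * ((M + 1) * σ.length) := by
    have : K * ν ≤ K * (V1 + (M + 1) * σ.length) := by gcongr
    linarith
  have u2 : K * ν ≤ (1 + 2 * η) * T1 := by linarith [d1.2]
  have u3 : T1 ≤ (1 + η) * T := by linarith
  have u4 : T1 ≤ (1 + η) * N := by nlinarith
  have u5 : K * ν ≤ (1 + 5 * η) * N := by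
    calc K * ν ≤ (1 + 2 * η) * ((1 + η) * N) := u2.trans (by gcongr)
      _ = (1 + 3 * η + 2 * η * η) * N := by ring
      _ ≤ _ := by
          apply mul_le_mul_of_nonneg_right _ hNpos.le
          nlinarith
  have l1 : (1 - η) * T ≤ K * ν := by
    have : K * V ≤ K * ν := by gcongr
    linarith [a1.1]
  have l2 : (1 - 2 * η) * N ≤ (1 - 2 * η) * ((1 + η) * T) := by
    apply mul_le_mul_of_nonneg_left _ (by linarith)
    linarith
  have l3 : (1 - 2 * η) * ((1 + η) * T) ≤ (1 - η) * T := by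
    have : 0 ≤ η * η * T := by positivity
    nlinarith
  have hfin : |K * ν - N| ≤ 5 * η * N := by
    have : 0 ≤ η * N := by positivity
    rw [abs_le]
    constructor <;> linarith
  have hKpos : 0 < K := by linarith
  rw [Real.dist_eq]
  have e1 : (ν : ℝ) / N - 1 / K = (K * ν - N) / (K * N) := by
    field_simp
  rw [e1, abs_div, abs_of_pos (show 0 < K * (N : ℝ) by positivity), div_lt_iff₀ (by positivity)]
  calc |K * ν - N| ≤ 5 * η * N := hfin
    _ < ε * N := by gcongr; linarith
    _ ≤ ε * (K * N) := by gcongr; exact le_mul_of_one_le_left hNpos.le hK1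
end

section
/- Fix an integer base g ≥ 2, a real ε > 0, and k ∈ ℕ. Then the number of integers n in [1, m] for which n² is not (ε,k)-normal to base g is o(m) as m → ∞. -/
open Filter Asymptotics

namespace EKN
open Finset

def cnt (g k v a N : ℕ) : ℕ := ((range N).filter (fun j => a / g ^ j % g ^ k = v)).card

lemma sum_range_mul' (f : ℕ → ℝ) (a b : ℕ) :
    ∑ x ∈ range (a * b), f x = ∑ q ∈ range a, ∑ r ∈ range b, f (q * b + r) := by
  induction a with
  | zero => simp
  | succ a ih => rw [Nat.succ_mul, Finset.sum_range_add, ih, Finset.sum_range_succ]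

noncomputable def X (g k v i b : ℕ) : ℝ := (if b / g ^ i % g ^ k = v then 1 else 0) - 1 / (g : ℝ) ^ k

lemma X_abs (g k v i b : ℕ) (hg : 2 ≤ g) : |X g k v i b| ≤ 1 := by
  have h1 : (1:ℝ) ≤ (g:ℝ) ^ k := one_le_pow₀ (by exact_mod_cast (by omega : 1 ≤ g))
  have h2 : 1 / (g:ℝ)^k ≤ 1 := by rw [div_le_one (by linarith)]; exact h1
  have h3 : 0 ≤ 1 / (g:ℝ)^k := by positivity
  unfold X
  rw [abs_le]
  split_ifs <;> constructor <;> linarith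

lemma X_sum_zero (g k v A : ℕ) (hg : 2 ≤ g) (hv : v < g ^ k) :
    ∑ q ∈ range (A * g ^ k), X g k v 0 q = 0 := by
  rw [sum_range_mul']
  apply Finset.sum_eq_zero
  intro q _
  have : ∀ r ∈ range (g ^ k), X g k v 0 (q * g ^ k + r) = (if r = v then (1:ℝ) else 0) - 1 / (g : ℝ) ^ k := by
    intro r hr
    simp only [X, pow_zero, Nat.div_one]
    rw [Nat.mul_add_mod', Nat.mod_eq_of_lt (by simpa using hr)]
  rw [Finset.sum_congr rfl this, Finset.sum_sub_distrib]
  have : (g:ℝ) ^ k ≠ 0 := by positivity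
  simp [hv, mul_inv_cancel₀ this]

lemma X_indep (g k v i j R : ℕ) (hg : 2 ≤ g) (hv : v < g ^ k) (hij : i + k ≤ j) (hR : j + k ≤ R) :
    ∑ b ∈ range (g ^ R), X g k v i b * X g k v j b = 0 := by
  obtain ⟨A, rfl⟩ := Nat.exists_eq_add_of_le hR
  have e : g ^ (j + k + A) = (g ^ A * g ^ k) * g ^ j := by ring
  have hgj : 0 < g ^ j := by positivity
  rw [e, sum_range_mul']
  have : ∀ q ∈ range (g ^ A * g ^ k), ∑ r ∈ range (g ^ j), X g k v i (q * g ^ j + r) * X g k v j (q * g ^ j + r)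
      = (∑ r ∈ range (g ^ j), X g k v i r) * X g k v 0 q := by
    intro q _
    rw [Finset.sum_mul]
    apply Finset.sum_congr rfl
    intro r hr
    have hr' : r < g ^ j := by simpa using hr
    have h1 : X g k v j (q * g ^ j + r) = X g k v 0 q := by
      have : (q * g ^ j + r) / g ^ j = q := by
        rw [Nat.add_div_of_dvd_right (Dvd.intro_left q rfl), Nat.mul_div_cancel _ hgj, Nat.div_eq_of_lt hr', add_zero]
      simp [X, this]
    have h2 : X g k v i (q * g ^ j + r) = X g k v i r := by
      have : (q * g ^ j + r) / g ^ i % g ^ k = r / g ^ i % g ^ k := by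
        rw [← Nat.mod_mul_right_div_self, ← Nat.mod_mul_right_div_self, ← pow_add]
        obtain ⟨d, rfl⟩ := Nat.exists_eq_add_of_le hij
        have : q * g ^ (i + k + d) + r = r + g ^ (i + k) * (q * g ^ d) := by ring
        rw [this, Nat.add_mul_mod_self_left]
      simp [X, this]
    rw [h1, h2]
  rw [Finset.sum_congr rfl this, ← Finset.mul_sum, X_sum_zero g k v _ hg hv, mul_zero]

lemma sum_X (g k v b M : ℕ) : ∑ i ∈ range M, X g k v i b = (cnt g k v b M : ℝ) - M / (g:ℝ)^k := by
  simp only [X, Finset.sum_sub_distrib, cnt]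
  simp [div_eq_mul_inv]

lemma variance (g k v M R : ℕ) (hg : 2 ≤ g) (hv : v < g ^ k) (hR : M + k ≤ R) :
    ∑ b ∈ range (g ^ R), ((cnt g k v b M : ℝ) - M / (g:ℝ)^k) ^ 2 ≤ M * (2 * k) * (g:ℝ) ^ R := by
  have h0 : ∀ b, ((cnt g k v b M : ℝ) - M / (g:ℝ)^k) ^ 2 =
      ∑ i ∈ range M, ∑ j ∈ range M, X g k v i b * X g k v j b := by
    intro b
    rw [← sum_X, sq, Finset.sum_mul_sum]
  simp_rw [h0]
  rw [Finset.sum_comm]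
  have key : ∀ i ∈ range M, ∑ b ∈ range (g ^ R), ∑ j ∈ range M, X g k v i b * X g k v j b ≤ (2 * k) * (g:ℝ)^R := by
    intro i hi
    rw [Finset.sum_comm]
    have h1 : ∀ j ∈ range M, ∑ b ∈ range (g ^ R), X g k v i b * X g k v j b ≤
        if j ∈ Finset.Ico (i - k) (i + k) then (g:ℝ)^R else 0 := by
      intro j hj
      simp only [Finset.mem_range] at hi hj
      split_ifs with h
      · calc _ ≤ ∑ b ∈ range (g ^ R), (1:ℝ) := by
              apply Finset.sum_le_sum
              intro b _
              have := mul_le_mul (X_abs g k v i b hg) (X_abs g k v j b hg) (abs_nonneg _) zero_le_one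
              rw [← abs_mul] at this
              linarith [le_abs_self (X g k v i b * X g k v j b)]
          _ = _ := by simp
      · simp only [Finset.mem_Ico, not_and_or, not_le, not_lt] at h
        rcases h with h | h
        · have := X_indep g k v j i R hg hv (by omega) (by omega)
          simp_rw [mul_comm (X g k v i _)]
          exact this.le
        · exact (X_indep g k v i j R hg hv (by omega) (by omega)).le
    refine (Finset.sum_le_sum h1).trans ?_
    rw [← Finset.sum_filter, Finset.sum_const, nsmul_eq_mul]
    gcongr
    have : (Finset.filter (fun j => j ∈ Finset.Ico (i - k) (i + k)) (range M)).card ≤ 2 * k := by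
      refine (Finset.card_le_card (t := Finset.Ico (i - k) (i + k)) ?_).trans ?_
      · intro x hx; exact (Finset.mem_filter.1 hx).2
      · simp; omega
    exact_mod_cast this
  refine (Finset.sum_le_sum key).trans ?_
  simp [mul_assoc]

open scoped Classical in
noncomputable def Bad (g k v M R : ℕ) (ε : ℝ) : Finset ℕ :=
  (range (g ^ R)).filter (fun b => ε * M < |(cnt g k v b M : ℝ) - M / (g:ℝ)^k|)

lemma bad_card (g k v M R : ℕ) (ε : ℝ) (hε : 0 < ε) (hg : 2 ≤ g) (hv : v < g ^ k) (hR : M + k ≤ R) :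
    ((Bad g k v M R ε).card : ℝ) * (ε * M) ^ 2 ≤ M * (2 * k) * (g:ℝ) ^ R := by
  refine le_trans ?_ (variance g k v M R hg hv hR)
  rw [← nsmul_eq_mul, ← Finset.sum_const]
  refine (Finset.sum_le_sum ?_).trans (Finset.sum_le_sum_of_subset_of_nonneg (Finset.filter_subset _ _) (fun _ _ _ => sq_nonneg _))
  intro b hb
  have := (Finset.mem_filter.1 hb).2
  rw [← sq_abs ((cnt g k v b M : ℝ) - M / (g:ℝ)^k)]
  gcongr

lemma nu_eq (g a : ℕ) (hg : 2 ≤ g) (σ : List ℕ) (hk : 1 ≤ σ.length) (hσ : ∀ d ∈ σ, d < g) :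
    nu (digs g a) σ = cnt g σ.length (Nat.ofDigits g σ.reverse) a ((Nat.digits g a).length + 1 - σ.length) := by
  unfold nu cnt digs
  set D := Nat.digits g a with hD
  have key : ∀ i, i + σ.length ≤ D.length → (σ <+: D.reverse.drop i ↔
      a / g ^ (D.length - i - σ.length) % g ^ σ.length = Nat.ofDigits g σ.reverse) := by
    intro i hi
    have hl : ((D.drop (D.length - i - σ.length)).take σ.length).length = σ.length := by
      simp; omega
    rw [Nat.self_div_pow_eq_ofDigits_drop _ _ hg, ← hD, Nat.ofDigits_mod_pow_eq_ofDigits_take _ (by omega)]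
    · rw [List.prefix_iff_eq_take]
      have e : (D.reverse.drop i).take σ.length = ((D.drop (D.length - i - σ.length)).take σ.length).reverse := by
        apply List.ext_getElem
        · rw [List.length_reverse, hl]; simp; omega
        · intro n h1 h2
          simp only [List.getElem_take, List.getElem_drop, List.getElem_reverse, List.length_take, List.length_drop]
          congr 1
          simp at h1
          omega
      rw [e]
      constructor
      · intro h
        conv_rhs => rw [h]
        rw [List.reverse_reverse]
      · intro h
        have := Nat.ofDigits_inj_of_len_eq (by omega : 1 < g) (by rw [hl]; simp) ?_ ?_ h
        · rw [this]; simp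
        · intro l hl
          exact Nat.digits_lt_base (by omega) (List.mem_of_mem_drop (List.mem_of_mem_take hl))
        · intro l hl; exact hσ l (by simpa using hl)
    · intro l hl
      exact Nat.digits_lt_base (by omega) (List.mem_of_mem_drop hl)
  have key2 : ∀ i, σ <+: D.reverse.drop i → i + σ.length ≤ D.length := by
    intro i h
    have := h.length_le
    simp at this
    omega
  apply Finset.card_bij' (fun i _ => D.length - i - σ.length) (fun j _ => D.length - j - σ.length)
  · intro i hi
    simp only [Finset.mem_filter, Finset.mem_range] at hi ⊢
    have h2 := key2 i hi.2
    exact ⟨by omega, (key i h2).1 hi.2⟩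
  · intro j hj
    simp only [Finset.mem_filter, Finset.mem_range, List.length_reverse] at hj ⊢
    refine ⟨by omega, ?_⟩
    rw [key _ (by omega)]
    convert hj.2 using 4
    omega
  · intro i hi
    simp only [Finset.mem_filter, Finset.mem_range] at hi ⊢
    have h2 := key2 i hi.2
    omega
  · intro j hj
    simp only [Finset.mem_filter, Finset.mem_range, List.length_reverse] at hj ⊢
    omega

lemma cnt_add (g k v a N d : ℕ) : cnt g k v a (N + d) = cnt g k v a N + cnt g k v (a / g ^ N) d := by
  unfold cnt
  simp only [Finset.card_filter]
  rw [Finset.sum_range_add]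
  simp only [pow_add, Nat.div_div_eq_div_mul]

lemma cnt_le (g k v a N : ℕ) : cnt g k v a N ≤ N := by
  unfold cnt; exact (Finset.card_filter_le _ _).trans (by simp)

lemma cnt_diff (g k v a N N' c : ℕ) (h : N ≤ N' + c) : cnt g k v a N ≤ cnt g k v a N' + c := by
  by_cases h' : N ≤ N'
  · obtain ⟨d, rfl⟩ := Nat.exists_eq_add_of_le h'
    have := cnt_add g k v a N d
    omega
  · obtain ⟨d, rfl⟩ := Nat.exists_eq_add_of_le (le_of_not_ge h')
    have := cnt_add g k v a N' d
    have := cnt_le g k v (a / g ^ N') d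
    omega

lemma cnt_mod (g k v a N R : ℕ) (h : N + k ≤ R) : cnt g k v (a % g ^ R) N = cnt g k v a N := by
  unfold cnt
  congr 1
  apply Finset.filter_congr
  intro j hj
  simp at hj
  rw [← Nat.mod_mul_right_div_self, ← Nat.mod_mul_right_div_self (m := a), ← pow_add,
    Nat.mod_mod_of_dvd _ (pow_dvd_pow g (by omega))]

/-- goodness -/
def Good (g s n : ℕ) : Prop := ∀ p, p.Prime → p ∣ g → ¬ p ^ s ∣ 2 * n

lemma gcd_dvd (g s u Q : ℕ) (hg : 2 ≤ g) (hu : ∀ p, p.Prime → p ∣ g → ¬ p ^ s ∣ u) :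
    Nat.gcd u (g ^ Q) ∣ g ^ s := by
  have hne : Nat.gcd u (g ^ Q) ≠ 0 := by
    have : g ^ Q ≠ 0 := by positivity
    exact Nat.gcd_ne_zero_right this
  rw [Nat.dvd_iff_prime_pow_dvd_dvd]
  intro p l hp h
  by_cases hl : l = 0
  · simp [hl]
  have hpg : p ∣ g := hp.dvd_of_dvd_pow ((dvd_pow_self p hl).trans (h.trans (Nat.gcd_dvd_right _ _)))
  have hls : l < s := by
    by_contra hc
    exact hu p hp hpg ((pow_dvd_pow p (by omega)).trans (h.trans (Nat.gcd_dvd_left _ _)))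
  exact (pow_dvd_pow p hls.le).trans (pow_dvd_pow_of_dvd hpg s)

lemma good_inj_aux (g s M Q n n' : ℕ) (hg : 2 ≤ g) (hQ : M ≤ Q) (hs : s ≤ M) (hn : Good g s n)
    (h1 : n ^ 2 % g ^ Q = n' ^ 2 % g ^ Q) (h2 : n % g ^ s = n' % g ^ s)
    (h3 : n / g ^ (M - s) = n' / g ^ (M - s)) (hle : n ≤ n') : n = n' := by
  obtain ⟨d, rfl⟩ := Nat.exists_eq_add_of_le hle
  have hd : g ^ s ∣ d := by
    have : n + d ≡ n + 0 [MOD g ^ s] := h2.symm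
    exact (Nat.modEq_zero_iff_dvd).1 (Nat.ModEq.add_left_cancel' n this)
  have hq : g ^ Q ∣ (2 * n + d) * d := by
    have : n ^ 2 + (2 * n + d) * d ≡ n ^ 2 + 0 [MOD g ^ Q] := by
      unfold Nat.ModEq
      rw [add_zero, h1]; congr 1; ring
    exact (Nat.modEq_zero_iff_dvd).1 (Nat.ModEq.add_left_cancel' _ this)
  have hu : ∀ p, p.Prime → p ∣ g → ¬ p ^ s ∣ 2 * n + d := by
    intro p hp hpg h
    exact hn p hp hpg ((Nat.dvd_add_left ((pow_dvd_pow_of_dvd hpg s).trans hd)).1 h)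
  have hM : g ^ M ∣ (2 * n + d) * d := (pow_dvd_pow g hQ).trans hq
  have h4 : g ^ M ∣ g ^ s * d := by
    have a1 : g ^ M ∣ Nat.gcd (2 * n + d) (g ^ M) * d := by
      rw [← Nat.gcd_mul_right]
      exact Nat.dvd_gcd hM (Dvd.intro _ rfl)
    exact a1.trans (Nat.mul_dvd_mul_right (gcd_dvd g s _ M hg hu) d)
  have h5 : g ^ (M - s) ∣ d := by
    have : g ^ M = g ^ s * g ^ (M - s) := by rw [← pow_add]; congr 1; omega
    rw [this] at h4
    exact Nat.dvd_of_mul_dvd_mul_left (by positivity) h4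
  obtain ⟨e, rfl⟩ := h5
  have hp : 0 < g ^ (M - s) := by positivity
  rw [Nat.add_mul_div_left _ _ hp] at h3
  have : e = 0 := by omega
  simp [this]

lemma up_inj_aux (g c M n n' : ℕ) (hg : 2 ≤ g) (hc : c ≤ M) (hn : g ^ (M - c) ≤ n)
    (h1 : n ^ 2 / g ^ M = n' ^ 2 / g ^ M) (h2 : n % g ^ c = n' % g ^ c) (hle : n ≤ n') : n = n' := by
  obtain ⟨d, rfl⟩ := Nat.exists_eq_add_of_le hle
  have hd : g ^ c ∣ d := by
    have : n + d ≡ n + 0 [MOD g ^ c] := h2.symm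
    exact (Nat.modEq_zero_iff_dvd).1 (Nat.ModEq.add_left_cancel' n this)
  obtain ⟨e, rfl⟩ := hd
  by_contra hne
  have he : 1 ≤ e := by
    rcases Nat.eq_zero_or_pos e with h | h
    · subst h; simp at hne
    · exact h
  have hp : 0 < g ^ M := by positivity
  have hgM : g ^ M = g ^ (M - c) * g ^ c := by rw [← pow_add]; congr 1; omega
  have : n ^ 2 + g ^ M ≤ (n + g ^ c * e) ^ 2 := by
    have : g ^ (M - c) * g ^ c ≤ n * (g ^ c * e) := by
      apply Nat.mul_le_mul hn; nlinarith [Nat.zero_le (g ^ c)]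
    nlinarith
  have := Nat.div_le_div_right (c := g ^ M) this
  rw [Nat.add_div_right _ hp] at this
  omega

lemma not_good_card (g t m : ℕ) (hg : 2 ≤ g) [DecidablePred fun n => ¬ Good g (t + 1) n] :
    (((Finset.Icc 1 m).filter fun n => ¬ Good g (t + 1) n).card : ℝ) ≤ g / 2 ^ t * m := by
  have hsub : ((Finset.Icc 1 m).filter fun n => ¬ Good g (t + 1) n) ⊆
      (Finset.Icc 2 g).biUnion (fun p => (Finset.Ioc 0 m).filter (fun n => p ^ t ∣ n)) := by
    intro n hn
    rw [Finset.mem_filter, Finset.mem_Icc] at hn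
    simp only [Good, not_forall, not_not] at hn
    obtain ⟨⟨h1, h2⟩, p, hp, hpg, hd⟩ := hn
    simp only [Finset.mem_biUnion, Finset.mem_filter, Finset.mem_Icc, Finset.mem_Ioc]
    refine ⟨p, ⟨hp.two_le, Nat.le_of_dvd (by omega) hpg⟩, ⟨by omega, h2⟩, ?_⟩
    by_cases h : p = 2
    · subst h
      rw [pow_succ, mul_comm] at hd
      exact Nat.dvd_of_mul_dvd_mul_left (by norm_num) hd
    · have hc : Nat.Coprime (p ^ (t + 1)) 2 :=
        Nat.Coprime.pow_left _ ((Nat.coprime_primes hp Nat.prime_two).2 h)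
      exact (pow_dvd_pow p (Nat.le_succ t)).trans (hc.dvd_of_dvd_mul_left hd)
  have h1 := (Finset.card_le_card hsub).trans Finset.card_biUnion_le
  have h2 : ∑ p ∈ Finset.Icc 2 g, ((Finset.Ioc 0 m).filter (fun n => p ^ t ∣ n)).card ≤ g * (m / 2 ^ t) := by
    calc _ ≤ ∑ p ∈ Finset.Icc 2 g, m / 2 ^ t := by
          apply Finset.sum_le_sum
          intro p hp
          rw [Nat.Ioc_filter_dvd_card_eq_div]
          exact Nat.div_le_div_left (Nat.pow_le_pow_left (Finset.mem_Icc.1 hp).1 t) (by positivity)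
      _ ≤ _ := by
          rw [Finset.sum_const, smul_eq_mul]
          apply Nat.mul_le_mul_right
          rw [Nat.card_Icc]; omega
  have h3 : ((m / 2 ^ t : ℕ) : ℝ) ≤ m / 2 ^ t := by
    have := @Nat.cast_div_le ℝ _ _ _ m (2 ^ t)
    simpa using this
  calc _ ≤ ((g * (m / 2 ^ t) : ℕ) : ℝ) := by exact_mod_cast h1.trans h2
    _ = g * ((m / 2 ^ t : ℕ) : ℝ) := by push_cast; rfl
    _ ≤ g * (m / 2 ^ t) := by gcongr
    _ = _ := by ring

lemma pointwise (g k M c n : ℕ) (ε : ℝ) (hg : 2 ≤ g) (hk : 1 ≤ k) (hε : 0 < ε) (hc : c ≤ M)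
    (hn1 : g ^ (M - c) ≤ n) (hn2 : n < g ^ (M + 1)) (hM : 4 * c + k + 4 + 2 * c * ε ≤ ε * M)
    (hlow : ∀ v < g ^ k, n ^ 2 % g ^ (M + k + 2) ∉ Bad g k v M (M + k + 2) (ε / 4))
    (hup : ∀ v < g ^ k, n ^ 2 / g ^ M ∉ Bad g k v M (M + k + 2) (ε / 4)) :
    EKNormalInt g ε k (n ^ 2) := by
  intro σ hσk hσ
  have hv := Nat.ofDigits_lt_base_pow_length (b := g) (l := σ.reverse) (by omega) (by simpa using hσ)
  rw [List.length_reverse, hσk] at hv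
  have hn0 : n ≠ 0 := by
    have : 0 < g ^ (M - c) := by positivity
    omega
  have hn20 : n ^ 2 ≠ 0 := by positivity
  rw [nu_eq g _ hg σ (by omega) hσ, Nat.length_digits g _ (by omega) hn20, hσk]
  set v := Nat.ofDigits g σ.reverse with hvdef
  have hsq : n ^ 2 < g ^ (2 * M + 2) := by
    calc n ^ 2 < (g ^ (M + 1)) ^ 2 := Nat.pow_lt_pow_left hn2 (by norm_num)
      _ = _ := by rw [← pow_mul]; congr 1; ring
  have hL1 : Nat.log g (n ^ 2) < 2 * M + 2 := Nat.log_lt_of_lt_pow hn20 hsq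
  have hL2 : 2 * (M - c) ≤ Nat.log g (n ^ 2) := by
    apply Nat.le_log_of_pow_le (by omega)
    calc g ^ (2 * (M - c)) = (g ^ (M - c)) ^ 2 := by rw [← pow_mul]; congr 1; ring
      _ ≤ _ := Nat.pow_le_pow_left hn1 2
  have e1 := hlow v hv
  have e2 := hup v hv
  simp only [Bad, Finset.mem_filter, Finset.mem_range, not_and, not_lt] at e1 e2
  have e1 := e1 (Nat.mod_lt _ (by positivity))
  have e2 := e2 (by
    apply Nat.div_lt_of_lt_mul
    refine hsq.trans_le ?_
    rw [← pow_add]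
    exact Nat.pow_le_pow_right (by omega) (by omega))
  rw [cnt_mod _ _ _ _ _ _ (by omega)] at e1
  have e3 := cnt_add g k v (n ^ 2) M M
  unfold Lg
  set L := Nat.log g (n ^ 2) + 1 with hLdef
  have d1 := cnt_diff g k v (n ^ 2) (L + 1 - k) (M + M) (2 * c + k + 2) (by omega)
  have d2 := cnt_diff g k v (n ^ 2) (M + M) (L + 1 - k) (2 * c + k + 2) (by omega)
  have p0 : (1:ℝ) ≤ (g:ℝ) ^ k := one_le_pow₀ (by exact_mod_cast (by omega : 1 ≤ g))
  have p1 : 1 / (g:ℝ)^k ≤ 1 := by rw [div_le_one (by linarith)]; exact p0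
  have p2 : 0 ≤ 1 / (g:ℝ)^k := by positivity
  rw [div_eq_mul_one_div (M:ℝ)] at e1 e2
  set p := 1 / (g:ℝ)^k with hp
  have hLa : (L:ℝ) ≤ 2 * M + 2 := by exact_mod_cast (by omega : L ≤ 2 * M + 2)
  have hLb : (2 * M : ℝ) ≤ L + 2 * c := by exact_mod_cast (by omega : 2 * M ≤ L + 2 * c)
  have hL0 : (0:ℝ) < L := by exact_mod_cast (by omega : 0 < L)
  have d1' : (cnt g k v (n ^ 2) (L + 1 - k) : ℝ) ≤ cnt g k v (n ^ 2) M + cnt g k v (n ^ 2 / g ^ M) M + (2 * c + k + 2) := by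
    rw [e3] at d1; exact_mod_cast d1
  have d2' : (cnt g k v (n ^ 2) M + cnt g k v (n ^ 2 / g ^ M) M : ℝ) ≤ cnt g k v (n ^ 2) (L + 1 - k) + (2 * c + k + 2) := by
    rw [e3] at d2; exact_mod_cast d2
  rw [abs_le] at e1 e2
  have q1 : p * (2 * M - L) ≤ 2 * c := by nlinarith [(Nat.cast_nonneg c : (0:ℝ) ≤ c)]
  have q2 : p * (L - 2 * M) ≤ 2 := by nlinarith
  have q3 : ε * (2 * M) ≤ ε * (L + 2 * c) := by gcongr
  have c0 : (0:ℝ) ≤ c := Nat.cast_nonneg c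
  have : (cnt g k v (n ^ 2) (L + 1 - k) : ℝ) / L - p = (cnt g k v (n ^ 2) (L + 1 - k) - p * L) / L := by
    field_simp
  rw [this, abs_div, abs_of_pos hL0, div_le_iff₀ hL0, abs_le]
  have M0 : (0:ℝ) ≤ ε * M := by positivity
  constructor <;> nlinarith

lemma low_card (g k v s M m : ℕ) (ε : ℝ) (hg : 2 ≤ g) (hs : s ≤ M) (hm : m < g ^ (M + 1)) (T : Finset ℕ)
    (hT : ∀ n ∈ T, n ≤ m ∧ Good g s n ∧ n ^ 2 % g ^ (M + k + 2) ∈ Bad g k v M (M + k + 2) ε) :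
    T.card ≤ (Bad g k v M (M + k + 2) ε).card * (g ^ s * g ^ (s + 1)) := by
  have : ((Bad g k v M (M + k + 2) ε) ×ˢ (range (g ^ s) ×ˢ range (g ^ (s + 1)))).card =
    (Bad g k v M (M + k + 2) ε).card * (g ^ s * g ^ (s + 1)) := by simp
  rw [← this]
  apply Finset.card_le_card_of_injOn
    (fun n => (n ^ 2 % g ^ (M + k + 2), n % g ^ s, n / g ^ (M - s)))
  · intro n hn
    have := hT n hn
    simp only [Finset.coe_product, Set.mem_prod, Finset.mem_coe, Finset.mem_range]
    refine ⟨this.2.2, Nat.mod_lt _ (by positivity), ?_⟩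
    apply Nat.div_lt_of_lt_mul
    rw [← pow_add, show M - s + (s + 1) = M + 1 by omega]
    omega
  · intro a ha b hb h
    simp only [Prod.mk.injEq] at h
    obtain ⟨h1, h2, h3⟩ := h
    rcases le_total a b with hab | hab
    · exact good_inj_aux g s M (M + k + 2) a b hg (by omega) hs (hT a ha).2.1 h1 h2 h3 hab
    · exact (good_inj_aux g s M (M + k + 2) b a hg (by omega) hs (hT b hb).2.1 h1.symm h2.symm h3.symm hab).symm

lemma up_card (g k v c M : ℕ) (ε : ℝ) (hg : 2 ≤ g) (hc : c ≤ M) (T : Finset ℕ)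
    (hT : ∀ n ∈ T, g ^ (M - c) ≤ n ∧ n ^ 2 / g ^ M ∈ Bad g k v M (M + k + 2) ε) :
    T.card ≤ (Bad g k v M (M + k + 2) ε).card * g ^ c := by
  have : ((Bad g k v M (M + k + 2) ε) ×ˢ (range (g ^ c))).card =
    (Bad g k v M (M + k + 2) ε).card * g ^ c := by simp
  rw [← this]
  apply Finset.card_le_card_of_injOn (fun n => (n ^ 2 / g ^ M, n % g ^ c))
  · intro n hn
    have := hT n hn
    simp only [Finset.coe_product, Set.mem_prod, Finset.mem_coe, Finset.mem_range]
    exact ⟨this.2, Nat.mod_lt _ (by positivity)⟩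
  · intro a ha b hb h
    simp only [Prod.mk.injEq] at h
    obtain ⟨h1, h2⟩ := h
    rcases le_total a b with hab | hab
    · exact up_inj_aux g c M a b hg hc (hT a ha).1 h1 h2 hab
    · exact (up_inj_aux g c M b a hg hc (hT b hb).1 h1.symm h2.symm hab).symm

lemma bad_card' (g k v M : ℕ) (ε : ℝ) (hε : 0 < ε) (hg : 2 ≤ g) (hv : v < g ^ k) (hM : 1 ≤ M) :
    ((Bad g k v M (M + k + 2) ε).card : ℝ) ≤ (2 * k * (g:ℝ) ^ (k + 2) / ε ^ 2) / M * (g:ℝ) ^ M := by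
  have h := bad_card g k v M (M + k + 2) ε hε hg hv (by omega)
  have hM' : (0:ℝ) < M := by exact_mod_cast hM
  rw [← le_div_iff₀ (by positivity)] at h
  refine h.trans (le_of_eq ?_)
  field_simp
  ring

open scoped Classical in
lemma final_bound (g k M c t m : ℕ) (ε : ℝ) (hg : 2 ≤ g) (hk : 1 ≤ k) (hε : 0 < ε) (hc : c ≤ M)
    (ht : t + 1 ≤ M) (hm1 : g ^ M ≤ m) (hm2 : m < g ^ (M + 1))
    (hM : 4 * c + k + 4 + 2 * c * ε ≤ ε * M) :
    (((Finset.Icc 1 m).filter fun n => ¬ EKNormalInt g ε k (n ^ 2)).card : ℝ) ≤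
      (1 / (g:ℝ) ^ c + g / 2 ^ t + ((g:ℝ) ^ k * ((2 * k * (g:ℝ) ^ (k + 2) / (ε / 4) ^ 2) *
        ((g:ℝ) ^ (t + 1) * (g:ℝ) ^ (t + 1 + 1) + (g:ℝ) ^ c))) / M) * m := by
  set A := (Finset.Icc 1 m).filter fun n => n < g ^ (M - c)
  set B := (Finset.Icc 1 m).filter fun n => ¬ Good g (t + 1) n
  set C : ℕ → Finset ℕ := fun v => (Finset.Icc 1 m).filter fun n =>
    n ≤ m ∧ Good g (t + 1) n ∧ n ^ 2 % g ^ (M + k + 2) ∈ Bad g k v M (M + k + 2) (ε / 4)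
  set D : ℕ → Finset ℕ := fun v => (Finset.Icc 1 m).filter fun n =>
    g ^ (M - c) ≤ n ∧ n ^ 2 / g ^ M ∈ Bad g k v M (M + k + 2) (ε / 4)
  have hsub : ((Finset.Icc 1 m).filter fun n => ¬ EKNormalInt g ε k (n ^ 2)) ⊆
      (A ∪ B) ∪ (range (g ^ k)).biUnion (fun v => C v ∪ D v) := by
    intro n hn
    rw [Finset.mem_filter] at hn
    obtain ⟨hn, hnn⟩ := hn
    have hnm := (Finset.mem_Icc.1 hn).2
    by_contra hcon
    simp only [A, B, C, D, Finset.mem_union, Finset.mem_biUnion, Finset.mem_filter, hn, true_and,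
      Finset.mem_range, not_or, not_exists, not_and, not_lt, not_not] at hcon
    obtain ⟨⟨h1, h2⟩, h3⟩ := hcon
    exact hnn (pointwise g k M c n ε hg hk hε hc h1 (by omega) hM
      (fun v hv => (h3 v hv).1 hnm h2) (fun v hv => (h3 v hv).2 h1))
  have hM1 : 1 ≤ M := by omega
  have hm1' : (g:ℝ) ^ M ≤ m := by exact_mod_cast hm1
  have hA : (A.card : ℝ) ≤ 1 / (g:ℝ) ^ c * m := by
    have h1 : A.card ≤ g ^ (M - c) := by
      calc A.card ≤ (range (g ^ (M - c))).card := by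
            apply Finset.card_le_card
            intro n hn
            simpa using (Finset.mem_filter.1 hn).2
        _ = _ := by simp
    have h2 : (g:ℝ) ^ (M - c) = 1 / (g:ℝ) ^ c * (g:ℝ) ^ M := by
      have : (g:ℝ) ^ M = g ^ (M - c) * g ^ c := by rw [← pow_add]; congr 1; omega
      rw [this]
      field_simp
    calc (A.card : ℝ) ≤ (g:ℝ) ^ (M - c) := by exact_mod_cast h1
      _ = 1 / (g:ℝ) ^ c * (g:ℝ) ^ M := h2
      _ ≤ _ := by gcongr
  have hB : (B.card : ℝ) ≤ g / 2 ^ t * m := not_good_card g t m hg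
  have hCD : ∀ v ∈ range (g ^ k), ((C v ∪ D v).card : ℝ) ≤
      ((2 * k * (g:ℝ) ^ (k + 2) / (ε / 4) ^ 2) / M * (g:ℝ) ^ M) * ((g:ℝ) ^ (t + 1) * (g:ℝ) ^ (t + 1 + 1) + (g:ℝ) ^ c) := by
    intro v hv
    have h1 := low_card g k v (t + 1) M m (ε / 4) hg ht hm2 (C v) (fun n hn => (Finset.mem_filter.1 hn).2)
    have h2 := up_card g k v c M (ε / 4) hg hc (D v) (fun n hn => (Finset.mem_filter.1 hn).2)
    have h3 := bad_card' g k v M (ε / 4) (by positivity) hg (by simpa using hv) hM1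
    have h4 := Finset.card_union_le (C v) (D v)
    have h5 : (C v ∪ D v).card ≤ (Bad g k v M (M + k + 2) (ε / 4)).card * (g ^ (t + 1) * g ^ (t + 1 + 1) + g ^ c) := by
      rw [mul_add]; omega
    calc ((C v ∪ D v).card : ℝ) ≤ ((Bad g k v M (M + k + 2) (ε / 4)).card : ℝ) * ((g:ℝ) ^ (t + 1) * (g:ℝ) ^ (t + 1 + 1) + (g:ℝ) ^ c) := by
          exact_mod_cast h5
      _ ≤ _ := by gcongr
  have hU : (((range (g ^ k)).biUnion (fun v => C v ∪ D v)).card : ℝ) ≤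
      (g:ℝ) ^ k * (((2 * k * (g:ℝ) ^ (k + 2) / (ε / 4) ^ 2) / M * (g:ℝ) ^ M) * ((g:ℝ) ^ (t + 1) * (g:ℝ) ^ (t + 1 + 1) + (g:ℝ) ^ c)) := by
    have h1 : (((range (g ^ k)).biUnion (fun v => C v ∪ D v)).card : ℝ) ≤ ∑ v ∈ range (g ^ k), ((C v ∪ D v).card : ℝ) := by
      exact_mod_cast (Finset.card_biUnion_le (s := range (g ^ k)) (t := fun v => C v ∪ D v))
    refine h1.trans ((Finset.sum_le_sum hCD).trans ?_)
    rw [Finset.sum_const, nsmul_eq_mul]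
    simp
  have hU2 : (g:ℝ) ^ k * (((2 * k * (g:ℝ) ^ (k + 2) / (ε / 4) ^ 2) / M * (g:ℝ) ^ M) * ((g:ℝ) ^ (t + 1) * (g:ℝ) ^ (t + 1 + 1) + (g:ℝ) ^ c))
      ≤ ((g:ℝ) ^ k * ((2 * k * (g:ℝ) ^ (k + 2) / (ε / 4) ^ 2) *
        ((g:ℝ) ^ (t + 1) * (g:ℝ) ^ (t + 1 + 1) + (g:ℝ) ^ c))) / M * m := by
    calc _ = ((g:ℝ) ^ k * ((2 * k * (g:ℝ) ^ (k + 2) / (ε / 4) ^ 2) *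
        ((g:ℝ) ^ (t + 1) * (g:ℝ) ^ (t + 1 + 1) + (g:ℝ) ^ c))) / M * (g:ℝ) ^ M := by ring
      _ ≤ _ := by gcongr
  have hcard := (Finset.card_le_card hsub).trans ((Finset.card_union_le _ _).trans
    (Nat.add_le_add_right (Finset.card_union_le A B) _))
  have hcard' : (((Finset.Icc 1 m).filter fun n => ¬ EKNormalInt g ε k (n ^ 2)).card : ℝ) ≤
      (A.card : ℝ) + B.card + ((range (g ^ k)).biUnion (fun v => C v ∪ D v)).card := by
    exact_mod_cast hcard
  rw [add_mul, add_mul]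
  linarith

lemma k_zero (g : ℕ) (hg : 2 ≤ g) (ε : ℝ) (hε : 0 < ε) (n : ℕ) (hn : 1 ≤ n) : EKNormalInt g ε 0 (n ^ 2) := by
  intro σ hσ _
  have h0 : σ = [] := List.length_eq_zero_iff.1 hσ
  subst h0
  have : nu (digs g (n ^ 2)) [] = Lg g (n ^ 2) := by
    simp [nu, digs, Lg, Nat.length_digits g (n ^ 2) (by omega) (by positivity)]
  rw [this]
  have : (Lg g (n ^ 2) : ℝ) ≠ 0 := by unfold Lg; positivity
  simp [div_self this, hε.le]

end EKN

open scoped Classical in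
theorem almost_all_squares_EK_normal (g : ℕ) (hg : 2 ≤ g) (ε : ℝ) (hε : 0 < ε) (k : ℕ) :
    (fun m : ℕ => (((Finset.Icc 1 m).filter fun n => ¬ EKNormalInt g ε k (n ^ 2)).card : ℝ))
      =o[atTop] fun m : ℕ => (m : ℝ) := by
  rcases Nat.eq_zero_or_pos k with rfl | hk
  · have : ∀ m : ℕ, (((Finset.Icc 1 m).filter fun n => ¬ EKNormalInt g ε 0 (n ^ 2)).card : ℝ) = 0 := by
      intro m
      rw [Nat.cast_eq_zero, Finset.card_eq_zero, Finset.filter_eq_empty_iff]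
      intro n hn
      rw [not_not]
      exact EKN.k_zero g hg ε hε n (Finset.mem_Icc.1 hn).1
    simp_rw [this]
    exact isLittleO_zero _ _
  rw [isLittleO_iff]
  intro η hη
  have hg1 : (1:ℝ) < g := by exact_mod_cast (by omega : 1 < g)
  obtain ⟨c, hc⟩ : ∃ c : ℕ, 1 / (g:ℝ) ^ c ≤ η / 3 := by
    obtain ⟨c, hc⟩ := exists_pow_lt_of_lt_one (by positivity : 0 < η / 3) (inv_lt_one_of_one_lt₀ hg1)
    exact ⟨c, by rw [one_div, ← inv_pow]; exact hc.le⟩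
  obtain ⟨t, ht⟩ : ∃ t : ℕ, (g:ℝ) / 2 ^ t ≤ η / 3 := by
    obtain ⟨t, ht⟩ := exists_pow_lt_of_lt_one (by positivity : 0 < η / 3 / g) (inv_lt_one_of_one_lt₀ (one_lt_two (α := ℝ)))
    refine ⟨t, ?_⟩
    rw [inv_pow, lt_div_iff₀ (by positivity)] at ht
    rw [div_eq_mul_inv, mul_comm]
    exact ht.le
  set K : ℝ := ((g:ℝ) ^ k * ((2 * k * (g:ℝ) ^ (k + 2) / (ε / 4) ^ 2) *
        ((g:ℝ) ^ (t + 1) * (g:ℝ) ^ (t + 1 + 1) + (g:ℝ) ^ c))) with hK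
  obtain ⟨M₁, hM₁⟩ := exists_nat_ge ((4 * c + k + 4 + 2 * c * ε) / ε)
  obtain ⟨M₂, hM₂⟩ := exists_nat_ge (K / (η / 3))
  filter_upwards [eventually_ge_atTop (g ^ (M₁ + M₂ + c + t + 1))] with m hm
  have hm0 : m ≠ 0 := by
    have : 0 < g ^ (M₁ + M₂ + c + t + 1) := by positivity
    omega
  set M := Nat.log g m with hMdef
  have hM : M₁ + M₂ + c + t + 1 ≤ M := Nat.le_log_of_pow_le (by omega) hm
  have hMa : (M₁:ℝ) ≤ M := by exact_mod_cast (by omega : M₁ ≤ M)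
  have hMb : (M₂:ℝ) ≤ M := by exact_mod_cast (by omega : M₂ ≤ M)
  have hM0 : (0:ℝ) < M := by exact_mod_cast (by omega : 0 < M)
  have h := EKN.final_bound g k M c t m ε hg hk hε (by omega) (by omega)
    (Nat.pow_log_le_self g hm0) (Nat.lt_pow_succ_log_self (by omega) m)
    (by rw [mul_comm ε, ← div_le_iff₀ hε]; linarith)
  have hK3 : K / M ≤ η / 3 := by
    rw [div_le_iff₀ hM0, mul_comm, ← div_le_iff₀ (by positivity)]
    linarith
  rw [Real.norm_of_nonneg (by positivity), Real.norm_of_nonneg (by positivity)]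
  refine h.trans ?_
  gcongr
  linarith
end

section
/- Fix an integer base g ≥ 2, a real ε > 0, and k ∈ ℕ, and let δ = δ(ε,k) > 0 be a constant such that for all sufficiently large m the number of integers in [1, m] that are not (ε,k)-normal to base g is at most m^{1−δ}. For a positive integer m, set m' = ⌊m^{1−δ/2}⌋, ℓ = ⌊(⌊log_g m²⌋ + 1)/2⌋, and let c(n, m) be the least nonnegative residue of n² modulo g^ℓ, regarded as a string of exactly ℓ base-g digits by padding with leading zeros. Then the number of integers n ∈ [m', m] for which the ℓ-digit string c(n, m) is not (ε,k)-normal is o(m) as m → ∞. -/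
open Filter Asymptotics

/-- A string `w` over `{0, …, g−1}` is `(ε,k)`-normal if every string `σ` of `k`
base-`g` digits satisfies `|ν(w,σ)/|w| − g^{−k}| ≤ ε`. -/
def EKNormalStr (g : ℕ) (ε : ℝ) (k : ℕ) (w : List ℕ) : Prop :=
  ∀ σ : List ℕ, σ.length = k → (∀ d ∈ σ, d < g) →
    |(nu w σ : ℝ) / (w.length : ℝ) - 1 / (g : ℝ) ^ k| ≤ ε

/-- The base-`g` representation of `a` (most significant digit first), padded with
leading zeros so as to have exactly `ℓ` digits. -/
def paddedDigs (g ℓ a : ℕ) : List ℕ :=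
  List.replicate (ℓ - (Nat.digits g a).length) 0 ++ (Nat.digits g a).reverse

theorem ppow {p : ℤ} (hp : Prime p) (a : ℤ) (s : ℕ) : ∀ (n : ℕ) (b : ℤ), p ^ n ∣ a * b → ¬ p ^ (s+1) ∣ b → p ^ (n - s) ∣ a := by
  induction s with
  | zero =>
    intro n b h hb
    exact hp.pow_dvd_of_dvd_mul_right n (by simpa using hb) h
  | succ s ih =>
    intro n b h hb
    by_cases hpb : p ∣ b
    · obtain ⟨b', rfl⟩ := hpb
      cases n with
      | zero => simp
      | succ n =>
        rw [Nat.succ_sub_succ]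
        apply ih n b'
        · have : p * p ^ n ∣ p * (a * b') := by
            convert h using 1 <;> ring
          exact (mul_dvd_mul_iff_left hp.ne_zero).1 this
        · intro h2
          apply hb
          rw [pow_succ']
          exact mul_dvd_mul_left p h2
    · exact (pow_dvd_pow p (Nat.sub_le _ _)).trans (hp.pow_dvd_of_dvd_mul_right n hpb h)

theorem sqcount (g : ℕ) (hg : 2 ≤ g) (s ℓ c : ℕ) :
    ((Finset.range (g ^ ℓ)).filter fun y =>
      (∀ p ∈ g.primeFactors, ¬ p ^ s ∣ y) ∧ y ^ 2 % g ^ ℓ = c).card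
      ≤ 2 ^ g.primeFactors.card * (∏ p ∈ g.primeFactors, p) ^ s := by
  classical
  set A := (Finset.range (g ^ ℓ)).filter fun y =>
      (∀ p ∈ g.primeFactors, ¬ p ^ s ∣ y) ∧ y ^ 2 % g ^ ℓ = c with hA
  rcases A.eq_empty_or_nonempty with h0 | ⟨x, hx⟩
  · rw [h0]; simp
  set e : ℕ → ℕ := fun p => g.factorization p * ℓ - s with he
  set W := ∏ p ∈ g.primeFactors, p ^ e p with hW
  have hWpos : 0 < W := Finset.prod_pos fun p hp => pow_pos (Nat.prime_of_mem_primeFactors hp).pos _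
  have hle : g ^ ℓ ≤ W * (∏ p ∈ g.primeFactors, p) ^ s := by
    have h1 : g ^ ℓ = ∏ p ∈ g.primeFactors, p ^ (g.factorization p * ℓ) := by
      conv_lhs => rw [← Nat.prod_factorization_pow_eq_self (n := g) (by omega)]
      rw [Finsupp.prod, ← Finset.prod_pow]
      simp [pow_mul]
    rw [h1, hW, ← Finset.prod_pow, ← Finset.prod_mul_distrib]
    apply Finset.prod_le_prod' 
    intro p hp
    rw [← pow_add]
    exact Nat.pow_le_pow_right (Nat.prime_of_mem_primeFactors hp).pos (by simp only [he]; omega)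
  have key : ∀ y ∈ A, ∀ p ∈ g.primeFactors, (p:ℤ) ^ e p ∣ (x:ℤ) - y ∨ (p:ℤ)^ e p ∣ (x:ℤ) + y := by
    intro y hy p hp
    have hpp := Nat.prime_of_mem_primeFactors hp
    have hpi : Prime (p:ℤ) := Nat.prime_iff_prime_int.1 hpp
    simp only [hA, Finset.mem_filter] at hx hy
    have h1 : (g:ℤ) ^ ℓ ∣ ((x:ℤ) - y) * (x + y) := by
      have : y ^ 2 ≡ x ^ 2 [MOD g ^ ℓ] := hy.2.2.trans hx.2.2.symm
      have := this.dvd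
      push_cast at this
      convert this using 1; ring
    have h2 : (p:ℤ) ^ (g.factorization p * ℓ) ∣ ((x:ℤ) - y) * (x + y) := by
      refine dvd_trans ?_ h1
      rw [pow_mul]
      apply pow_dvd_pow_of_dvd
      exact_mod_cast Nat.ordProj_dvd g p
    by_cases h3 : (p:ℤ) ^ (s+1) ∣ (x:ℤ) + y
    · right
      apply ppow hpi _ _ _ ((x:ℤ) - y) (by rw [mul_comm ((x:ℤ) + y)]; exact h2)
      intro h4
      have h5 := dvd_add h3 h4
      have h6 : (p:ℤ) ^ (s+1) ∣ (x:ℤ) * 2 := by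
        have e1 : (x:ℤ) * 2 = (x + y) + (x - y) := by ring
        rw [e1]; exact h5
      have h7 := ppow hpi (x:ℤ) 1 (s+1) 2 h6 (by
        intro h8
        have h9 : p ^ 2 ∣ 2 := by exact_mod_cast h8
        have := Nat.le_of_dvd (by norm_num) h9
        have := hpp.two_le
        nlinarith)
      apply hx.2.1 p hp
      exact_mod_cast h7
    · left
      exact ppow hpi _ _ _ _ h2 h3
  have : A.card ≤ (g.primeFactors.powerset ×ˢ Finset.range ((∏ p ∈ g.primeFactors, p) ^ s)).card := by
    apply Finset.card_le_card_of_injOn (fun y : ℕ => (g.primeFactors.filter (fun p : ℕ => (p:ℤ) ^ e p ∣ (x:ℤ) - y), y / W))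
    · intro y hy
      simp only [Finset.coe_product, Set.mem_prod, Finset.mem_coe, Finset.mem_powerset, Finset.mem_range]
      refine ⟨Finset.filter_subset _ _, ?_⟩
      rw [Nat.div_lt_iff_lt_mul hWpos, mul_comm]
      have hy' := (Finset.mem_filter.1 hy).1
      exact (Finset.mem_range.1 hy').trans_le hle
    · intro y hy z hz hyz
      simp only [Prod.mk.injEq] at hyz
      obtain ⟨h1, h2⟩ := hyz
      have h3 : (W:ℤ) ∣ (y:ℤ) - z := by
        rw [hW]; push_cast
        apply Finset.prod_dvd_of_coprime
        · intro p hp q hq hpq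
          have := (Nat.coprime_primes (Nat.prime_of_mem_primeFactors hp) (Nat.prime_of_mem_primeFactors hq)).2 hpq
          exact (Nat.isCoprime_iff_coprime.2 this).pow
        · intro p hp
          have h4 : (p ∈ g.primeFactors.filter (fun p : ℕ => (p:ℤ) ^ e p ∣ (x:ℤ) - y)) ↔ (p ∈ g.primeFactors.filter (fun p : ℕ => (p:ℤ) ^ e p ∣ (x:ℤ) - z)) := by rw [h1]
          simp only [Finset.mem_filter, hp, true_and] at h4
          by_cases h5 : (p:ℤ) ^ e p ∣ (x:ℤ) - y
          · have h6 := h4.1 h5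
            have := dvd_sub h6 h5
            convert this using 1; ring
          · have h6 := (key y hy p hp).resolve_left h5
            have h7 := (key z hz p hp).resolve_left (fun h => h5 (h4.2 h))
            have := dvd_sub h6 h7
            convert this using 1; ring
      have h4 : z ≡ y [MOD W] := Nat.modEq_iff_dvd.2 h3
      rw [← Nat.div_add_mod y W, ← Nat.div_add_mod z W, h2, h4]
  simpa using this

theorem smallcount (g : ℕ) (hg : 2 ≤ g) (s ℓ : ℕ) :
    ((((Finset.range (g ^ ℓ)).filter fun y => ∃ p ∈ g.primeFactors, p ^ s ∣ y).card : ℕ) : ℝ)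
      ≤ g * ((g:ℝ) ^ ℓ / 2 ^ s + 1) := by
  classical
  have h1 : ((Finset.range (g ^ ℓ)).filter fun y => ∃ p ∈ g.primeFactors, p ^ s ∣ y) ⊆
     g.primeFactors.biUnion fun p => (Finset.range (g ^ ℓ / 2 ^ s + 1)).image (fun t => p ^ s * t) := by
    intro y hy
    simp only [Finset.mem_filter, Finset.mem_range] at hy
    obtain ⟨hy, p, hp, t, rfl⟩ := hy
    simp only [Finset.mem_biUnion, Finset.mem_image, Finset.mem_range]
    refine ⟨p, hp, t, ?_, rfl⟩
    rw [Nat.lt_succ_iff, Nat.le_div_iff_mul_le (by positivity)]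
    have : 2 ^ s ≤ p ^ s := Nat.pow_le_pow_left (Nat.prime_of_mem_primeFactors hp).two_le s
    nlinarith
  have h2 := (Finset.card_le_card h1).trans (Finset.card_biUnion_le_card_mul _ _ (g ^ ℓ / 2 ^ s + 1) (fun p _ => Finset.card_image_le.trans (by simp)))
  have h3 : g.primeFactors.card ≤ g := by
    have : g.primeFactors ⊆ Finset.Icc 1 g := fun p hp => Finset.mem_Icc.2 ⟨(Nat.prime_of_mem_primeFactors hp).pos, Nat.le_of_mem_primeFactors hp⟩
    simpa using Finset.card_le_card this
  have h4 := h2.trans (Nat.mul_le_mul_right _ h3)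
  calc _ ≤ ((g * (g ^ ℓ / 2 ^ s + 1) : ℕ) : ℝ) := by exact_mod_cast h4
    _ ≤ _ := by
      push_cast
      gcongr
      have := @Nat.cast_div_le ℝ _ _ _ (g ^ ℓ) (2 ^ s)
      push_cast at this
      exact this

theorem padded_length (g : ℕ) (hg : 2 ≤ g) (ℓ c : ℕ) (hc : c < g ^ ℓ) : (paddedDigs g ℓ c).length = ℓ := by
  have := (Nat.digits_length_le_iff (b := g) (k := ℓ) (by omega) c).2 hc
  simp only [paddedDigs, List.length_append, List.length_replicate, List.length_reverse]
  omega

theorem padded_lt (g : ℕ) (hg : 2 ≤ g) (ℓ c : ℕ) : ∀ d ∈ (paddedDigs g ℓ c).reverse, d < g := by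
  intro d hd
  simp only [paddedDigs, List.mem_reverse, List.mem_append, List.mem_replicate] at hd
  rcases hd with hd | hd
  · omega
  · exact Nat.digits_lt_base (by omega) hd

theorem padded_val (g : ℕ) (ℓ c : ℕ) : Nat.ofDigits g (paddedDigs g ℓ c).reverse = c := by
  simp [paddedDigs, Nat.ofDigits_append, Nat.ofDigits_replicate_zero, Nat.ofDigits_digits]

theorem prefix_iff (g : ℕ) (hg : 2 ≤ g) (ℓ c i : ℕ) (hc : c < g ^ ℓ) (σ : List ℕ)
    (hσ : ∀ d ∈ σ, d < g) (hi : i + σ.length ≤ ℓ) :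
    σ <+: (paddedDigs g ℓ c).drop i ↔
      c / g ^ (ℓ - σ.length - i) % g ^ σ.length = Nat.ofDigits g σ.reverse := by
  have hlen := padded_length g hg ℓ c hc
  have hlt := padded_lt g hg ℓ c
  have hval := padded_val g ℓ c
  set w := paddedDigs g ℓ c
  have h1 : c / g ^ (ℓ - σ.length - i) % g ^ σ.length =
      Nat.ofDigits g ((w.drop i).take σ.length).reverse := by
    rw [← hval, Nat.ofDigits_div_pow_eq_ofDigits_drop _ (by omega) _ hlt,
      Nat.ofDigits_mod_pow_eq_ofDigits_take _ (by omega)]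
    · congr 1
      rw [List.drop_reverse, List.take_reverse, hlen, List.drop_take, List.length_take, hlen]
      congr 2
      · omega
      · congr 1
        omega
    · intro l hl
      exact hlt l (List.mem_of_mem_drop hl)
  rw [h1, List.prefix_iff_eq_take]
  constructor
  · intro h
    rw [← h]
  · intro h
    have := Nat.ofDigits_inj_of_len_eq (by omega : 1 < g) ?_ ?_ ?_ h
    · exact (List.reverse_injective this).symm
    · simp [hlen]; omega
    · intro l hl
      exact hlt l (by
        rw [List.mem_reverse] at hl ⊢
        exact List.mem_of_mem_drop (List.mem_of_mem_take hl))
    · intro l hl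
      exact hσ l (List.mem_reverse.1 hl)

theorem nu_eq (g : ℕ) (hg : 2 ≤ g) (ℓ c : ℕ) (hc : c < g ^ ℓ) (hℓ : 0 < ℓ) (σ : List ℕ)
    (hσ : ∀ d ∈ σ, d < g) (hk : σ.length ≤ ℓ) :
    nu (paddedDigs g ℓ c) σ ≤ ((Finset.range (ℓ - σ.length + 1)).filter
        fun r => c / g ^ r % g ^ σ.length = Nat.ofDigits g σ.reverse).card ∧ 
     ((Finset.range (ℓ - σ.length + 1)).filter
        fun r => c / g ^ r % g ^ σ.length = Nat.ofDigits g σ.reverse).card ≤ nu (paddedDigs g ℓ c) σ + 1 := by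
  have hlen := padded_length g hg ℓ c hc
  unfold nu
  rw [hlen]
  have hpre : ∀ i, i < ℓ → σ <+: (paddedDigs g ℓ c).drop i → i + σ.length ≤ ℓ := by
    intro i hi h
    have := h.length_le
    rw [List.length_drop, hlen] at this
    omega
  constructor
  · apply Finset.card_le_card_of_injOn (fun i => ℓ - σ.length - i)
    · intro i hi
      simp only [Finset.coe_filter, Finset.mem_range, Set.mem_ofPred_eq] at hi ⊢
      have := hpre i hi.1 hi.2
      exact ⟨by omega, (prefix_iff g hg ℓ c i hc σ hσ this).1 hi.2⟩
    · intro i hi j hj hij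
      simp only [Finset.coe_filter, Finset.mem_range, Set.mem_ofPred_eq] at hi hj hij
      have := hpre i hi.1 hi.2
      have := hpre j hj.1 hj.2
      omega
  · have : ((Finset.range (ℓ - σ.length + 1)).filter
        fun r => c / g ^ r % g ^ σ.length = Nat.ofDigits g σ.reverse) ⊆ insert 0 (((Finset.range ℓ).filter (fun i => σ <+: (paddedDigs g ℓ c).drop i)).image (fun i => ℓ - σ.length - i)) := by
      intro r hr
      simp only [Finset.mem_filter, Finset.mem_range, Finset.mem_insert, Finset.mem_image] at hr ⊢
      by_cases h0 : r = 0
      · exact Or.inl h0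
      right
      have e : ℓ - σ.length - (ℓ - σ.length - r) = r := by omega
      refine ⟨ℓ - σ.length - r, ⟨by omega, ?_⟩, e⟩
      rw [prefix_iff g hg ℓ c _ hc σ hσ (by omega), e]
      exact hr.2
    refine (Finset.card_le_card this).trans ((Finset.card_insert_le _ _).trans ?_)
    exact Nat.add_le_add_right Finset.card_image_le 1

/-- centred indicator -/
noncomputable def YY (g k v r c : ℕ) : ℝ := (if c / g ^ r % g ^ k = v then 1 else 0) - 1 / (g:ℝ) ^ k

theorem sum_zero (g : ℕ) (hg : 2 ≤ g) (k v n : ℕ) (hv : v < g ^ k) :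
    ∑ b ∈ Finset.range (g ^ (n + k)), YY g k v 0 b = 0 := by
  have hgp : 0 < g ^ k := by positivity
  unfold YY
  rw [Finset.sum_sub_distrib, Finset.sum_boole, Finset.sum_const, Finset.card_range]
  have h := Nat.count_modEq_card (g ^ (n + k)) hgp v
  rw [Nat.count_eq_card_filter_range] at h
  have h2 : (Finset.range (g ^ (n+k))).filter (fun x => x / g ^ 0 % g ^ k = v) = (Finset.range (g ^ (n+k))).filter (fun x => x ≡ v [MOD g ^ k]) := by
    apply Finset.filter_congr
    intro x _
    simp [Nat.ModEq, Nat.mod_eq_of_lt hv]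
  rw [h2, h, pow_add, Nat.mul_div_cancel _ hgp]
  have : (g:ℝ) ≠ 0 := by positivity
  simp
  field_simp
  simp

theorem sum_split (M N : ℕ) (f : ℕ → ℝ) :
    ∑ c ∈ Finset.range (M * N), f c = ∑ b ∈ Finset.range N, ∑ a ∈ Finset.range M, f (a + M * b) := by
  induction N with
  | zero => simp
  | succ N ih =>
    rw [Nat.mul_succ, Finset.sum_range_add, ih, Finset.sum_range_succ]
    congr 1
    apply Finset.sum_congr rfl
    intros; rw [add_comm]

theorem orth (g : ℕ) (hg : 2 ≤ g) (k v ℓ r r' : ℕ) (hv : v < g ^ k) (h1 : r + k ≤ r') (h2 : r' + k ≤ ℓ) :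
    ∑ c ∈ Finset.range (g ^ ℓ), YY g k v r c * YY g k v r' c = 0 := by
  obtain ⟨n, rfl⟩ := Nat.exists_eq_add_of_le h2
  obtain ⟨q, rfl⟩ := Nat.exists_eq_add_of_le h1
  have hgp : ∀ j, 0 < g ^ j := fun j => by positivity
  have e : g ^ (r + k + q + k + n) = g ^ (r + k + q) * g ^ (n + k) := by rw [← pow_add]; congr 1; ring
  rw [e, sum_split _ _]
  have : ∀ b ∈ Finset.range (g ^ (n + k)), ∑ a ∈ Finset.range (g ^ (r + k + q)),
     YY g k v r (a + g ^ (r + k + q) * b) * YY g k v (r + k + q) (a + g ^ (r + k + q) * b) 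
     = (∑ a ∈ Finset.range (g ^ (r + k + q)), YY g k v r a) * YY g k v 0 b := by
    intro b _
    rw [Finset.sum_mul]
    apply Finset.sum_congr rfl
    intro a ha
    have ha := Finset.mem_range.1 ha
    congr 1
    · unfold YY
      have : (a + g ^ (r + k + q) * b) / g ^ r % g ^ k = a / g ^ r % g ^ k := by
        have : g ^ (r + k + q) * b = g ^ r * (g ^ k * (g ^ q * b)) := by ring
        rw [this, Nat.add_mul_div_left _ _ (hgp r), Nat.add_mul_mod_self_left]
      rw [this]
    · unfold YY
      rw [Nat.add_mul_div_left _ _ (hgp _), Nat.div_eq_of_lt ha]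
      simp
  rw [Finset.sum_congr rfl this, ← Finset.mul_sum, sum_zero g hg k v n hv, mul_zero]

theorem YY_abs (g : ℕ) (hg : 2 ≤ g) (k v r c : ℕ) : |YY g k v r c| ≤ 1 := by
  have h : (1:ℝ) ≤ (g:ℝ) ^ k := one_le_pow₀ (by exact_mod_cast (by omega : 1 ≤ g))
  have h1 : 1 / (g:ℝ) ^ k ≤ 1 := by rw [div_le_one (by positivity)]; exact h
  have h2 : 0 ≤ 1 / (g:ℝ) ^ k := by positivity
  unfold YY
  rw [abs_le]
  split_ifs <;> constructor <;> linarith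

theorem second_moment (g : ℕ) (hg : 2 ≤ g) (k v ℓ : ℕ) (hv : v < g ^ k) (hk : k ≤ ℓ) :
    ∑ c ∈ Finset.range (g ^ ℓ), (∑ r ∈ Finset.range (ℓ - k + 1), YY g k v r c) ^ 2
      ≤ (ℓ + 1) * (2 * k) * (g:ℝ) ^ ℓ := by
  have e1 : ∑ c ∈ Finset.range (g ^ ℓ), (∑ r ∈ Finset.range (ℓ - k + 1), YY g k v r c) ^ 2
     = ∑ r ∈ Finset.range (ℓ - k + 1), ∑ r' ∈ Finset.range (ℓ - k + 1),
       ∑ c ∈ Finset.range (g ^ ℓ), YY g k v r c * YY g k v r' c := by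
    simp_rw [sq, Finset.sum_mul_sum]
    rw [Finset.sum_comm]
    apply Finset.sum_congr rfl
    intro r _
    rw [Finset.sum_comm]
  have e2 : ∀ r ∈ Finset.range (ℓ - k + 1), ∑ r' ∈ Finset.range (ℓ - k + 1),
       ∑ c ∈ Finset.range (g ^ ℓ), YY g k v r c * YY g k v r' c ≤ (2 * k) * (g:ℝ) ^ ℓ := by
    intro r hr
    have hr := Finset.mem_range.1 hr
    have : ∀ r' ∈ Finset.range (ℓ - k + 1), ∑ c ∈ Finset.range (g ^ ℓ), YY g k v r c * YY g k v r' c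
       ≤ if r' ∈ Finset.Ico (r + 1 - k) (r + k) then (g:ℝ) ^ ℓ else 0 := by
      intro r' hr'
      have hr' := Finset.mem_range.1 hr'
      split_ifs with h
      · calc _ ≤ ∑ c ∈ Finset.range (g ^ ℓ), (1:ℝ) := by
              apply Finset.sum_le_sum
              intro c _
              refine (le_abs_self _).trans ?_
              rw [abs_mul]
              exact mul_le_one₀ (YY_abs g hg _ _ _ _) (abs_nonneg _) (YY_abs g hg _ _ _ _)
          _ = _ := by simp
      · rw [Finset.mem_Ico] at h
        apply le_of_eq
        by_cases h3 : r + k ≤ r'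
        · exact orth g hg k v ℓ r r' hv h3 (by omega)
        · simp_rw [mul_comm (YY g k v r _)]
          exact orth g hg k v ℓ r' r hv (by omega) (by omega)
    refine (Finset.sum_le_sum this).trans ?_
    rw [← Finset.sum_filter, Finset.sum_const, nsmul_eq_mul]
    gcongr
    have h5 : (Finset.filter (fun r' => r' ∈ Finset.Ico (r + 1 - k) (r + k)) (Finset.range (ℓ - k + 1))).card ≤ 2 * k := by
      refine (Finset.card_le_card (t := Finset.Ico (r + 1 - k) (r + k)) ?_).trans ?_
      · intro x hx; exact (Finset.mem_filter.1 hx).2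
      · rw [Nat.card_Ico]; omega
    exact_mod_cast h5
  rw [e1]
  refine (Finset.sum_le_sum e2).trans ?_
  rw [Finset.sum_const, Finset.card_range, nsmul_eq_mul, mul_assoc ((ℓ:ℝ) + 1)]
  gcongr
  have : ℓ - k + 1 ≤ ℓ + 1 := by omega
  exact_mod_cast this

theorem dev (g : ℕ) (hg : 2 ≤ g) (ε : ℝ) (k ℓ c : ℕ) (hc : c < g ^ ℓ) (hℓ : 0 < ℓ)
    (hk : k ≤ ℓ) (hb : (k:ℝ) + 2 ≤ ε * ℓ / 2) (h : ¬ EKNormalStr g ε k (paddedDigs g ℓ c)) :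
    ∃ v ∈ Finset.range (g ^ k), ε * ℓ / 2 ≤ |∑ r ∈ Finset.range (ℓ - k + 1), YY g k v r c| := by
  unfold EKNormalStr at h
  push Not at h
  obtain ⟨σ, hσk, hσ, h⟩ := h
  have hnu := nu_eq g hg ℓ c hc hℓ σ hσ (by omega)
  rw [padded_length g hg ℓ c hc] at h
  rw [hσk] at hnu
  set v := Nat.ofDigits g σ.reverse with hv
  refine ⟨v, ?_, ?_⟩
  · rw [Finset.mem_range, ← hσk, ← List.length_reverse (as := σ)]
    exact Nat.ofDigits_lt_base_pow_length (by omega) (fun x hx => hσ x (List.mem_reverse.1 hx))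
  have e1 : ∑ r ∈ Finset.range (ℓ - k + 1), YY g k v r c =
      (((Finset.range (ℓ - k + 1)).filter fun r => c / g ^ r % g ^ k = v).card : ℝ)
        - ((ℓ:ℝ) - k + 1) * (1 / (g:ℝ) ^ k) := by
    unfold YY
    rw [Finset.sum_sub_distrib, Finset.sum_boole, Finset.sum_const, Finset.card_range, nsmul_eq_mul]
    push_cast [Nat.cast_sub hk]
    rfl
  set S := ((Finset.range (ℓ - k + 1)).filter fun r => c / g ^ r % g ^ k = v).card
  have hp1 : (1:ℝ) ≤ (g:ℝ) ^ k := one_le_pow₀ (by exact_mod_cast (by omega : 1 ≤ g))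
  have hp2 : 1 / (g:ℝ) ^ k ≤ 1 := by rw [div_le_one (by positivity)]; exact hp1
  have hp3 : 0 ≤ 1 / (g:ℝ) ^ k := by positivity
  rw [e1]
  set p := 1 / (g:ℝ) ^ k
  have hS1 : (nu (paddedDigs g ℓ c) σ : ℝ) ≤ S := by exact_mod_cast hnu.1
  have hS2 : (S:ℝ) ≤ nu (paddedDigs g ℓ c) σ + 1 := by exact_mod_cast hnu.2
  set N := (nu (paddedDigs g ℓ c) σ : ℝ)
  have hl : (0:ℝ) < ℓ := by exact_mod_cast hℓ
  have h2 : ε * ℓ < |N - ℓ * p| := by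
    have : N - ℓ * p = (N / ℓ - p) * ℓ := by field_simp
    rw [this, abs_mul, abs_of_pos hl]
    exact mul_lt_mul_of_pos_right h hl
  have hkp : (k:ℝ) * p ≤ k := mul_le_of_le_one_right (by positivity) hp2
  have hkp0 : 0 ≤ (k:ℝ) * p := by positivity
  have e2 : (S:ℝ) - (ℓ - k + 1) * p = S - ℓ * p + k * p - p := by ring
  rw [e2]
  rcases lt_abs.1 h2 with h3 | h3
  · refine le_trans ?_ (le_abs_self _)
    linarith
  · refine le_trans ?_ (neg_le_abs _)
    linarith

open scoped Classical in
theorem badcount (g : ℕ) (hg : 2 ≤ g) (ε : ℝ) (hε : 0 < ε) (k ℓ : ℕ) (hℓ : 0 < ℓ)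
    (hk : k ≤ ℓ) (hb : (k:ℝ) + 2 ≤ ε * ℓ / 2) :
    (((Finset.range (g ^ ℓ)).filter fun c => ¬ EKNormalStr g ε k (paddedDigs g ℓ c)).card : ℝ)
      ≤ (g:ℝ) ^ k * (16 * k / ε ^ 2) / ℓ * (g:ℝ) ^ ℓ := by
  have hl : (0:ℝ) < ℓ := by exact_mod_cast hℓ
  have hl1 : (1:ℝ) ≤ ℓ := by exact_mod_cast hℓ
  set T : ℕ → Finset ℕ := fun v => (Finset.range (g ^ ℓ)).filter fun c => 
    ε * ℓ / 2 ≤ |∑ r ∈ Finset.range (ℓ - k + 1), YY g k v r c| with hT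
  have h1 : ((Finset.range (g ^ ℓ)).filter fun c => ¬ EKNormalStr g ε k (paddedDigs g ℓ c)) ⊆
      (Finset.range (g ^ k)).biUnion T := by
    intro c hc
    obtain ⟨hc1, hc2⟩ := Finset.mem_filter.1 hc
    obtain ⟨v, hv, hv2⟩ := dev g hg ε k ℓ c (Finset.mem_range.1 hc1) hℓ hk hb hc2
    exact Finset.mem_biUnion.2 ⟨v, hv, Finset.mem_filter.2 ⟨hc1, hv2⟩⟩
  have h2 : ∀ v ∈ Finset.range (g ^ k), ((T v).card : ℝ) ≤ (16 * k / ε ^ 2) / ℓ * (g:ℝ) ^ ℓ := by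
    intro v hv
    have h3 := second_moment g hg k v ℓ (Finset.mem_range.1 hv) hk
    have h4 : ((T v).card : ℝ) * (ε * ℓ / 2) ^ 2 ≤ (ℓ + 1) * (2 * k) * (g:ℝ) ^ ℓ := by
      refine le_trans ?_ h3
      rw [← nsmul_eq_mul, ← Finset.sum_const]
      refine le_trans (Finset.sum_le_sum (g := fun c => (∑ r ∈ Finset.range (ℓ - k + 1), YY g k v r c) ^ 2) ?_) (Finset.sum_le_sum_of_subset_of_nonneg (Finset.filter_subset _ _) (fun _ _ _ => sq_nonneg _))
      intro c hc
      rw [← sq_abs (∑ r ∈ Finset.range (ℓ - k + 1), YY g k v r c)]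
      have := (Finset.mem_filter.1 hc).2
      gcongr
    have h5 : (ℓ + 1) * (2 * k) * (g:ℝ) ^ ℓ ≤ ((16 * k / ε ^ 2) / ℓ * (g:ℝ) ^ ℓ) * (ε * ℓ / 2) ^ 2 := by
      have : ((16 * k / ε ^ 2) / ℓ * (g:ℝ) ^ ℓ) * (ε * ℓ / 2) ^ 2 = (ℓ + ℓ) * (2 * k) * (g:ℝ) ^ ℓ := by
        field_simp
        ring
      rw [this]
      gcongr
    exact le_of_mul_le_mul_right (h4.trans h5) (by positivity)
  calc _ ≤ (((Finset.range (g ^ k)).biUnion T).card : ℝ) := by exact_mod_cast Finset.card_le_card h1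
    _ ≤ ∑ v ∈ Finset.range (g ^ k), ((T v).card : ℝ) := by exact_mod_cast Finset.card_biUnion_le
    _ ≤ ∑ v ∈ Finset.range (g ^ k), (16 * k / ε ^ 2) / ℓ * (g:ℝ) ^ ℓ := Finset.sum_le_sum h2
    _ = _ := by
      rw [Finset.sum_const, Finset.card_range, nsmul_eq_mul]; push_cast; ring

open scoped Classical in
theorem sqbad (g : ℕ) (hg : 2 ≤ g) (ε : ℝ) (hε : 0 < ε) (k s : ℕ) :
    ∃ D : ℝ, ∀ ℓ : ℕ, 0 < ℓ → k ≤ ℓ → (k:ℝ) + 2 ≤ ε * ℓ / 2 →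
    (((Finset.range (g ^ ℓ)).filter fun n =>
      ¬ EKNormalStr g ε k (paddedDigs g ℓ (n ^ 2 % g ^ ℓ))).card : ℝ)
      ≤ ((g:ℝ) / 2 ^ s + D / ℓ) * (g:ℝ) ^ ℓ := by
  set C : ℕ := 2 ^ g.primeFactors.card * (∏ p ∈ g.primeFactors, p) ^ s with hC
  refine ⟨g + C * ((g:ℝ) ^ k * (16 * k / ε ^ 2)), fun ℓ hℓ hk hb => ?_⟩
  have hl : (0:ℝ) < ℓ := by exact_mod_cast hℓ
  have hgpos : 0 < g ^ ℓ := by positivity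
  have h1 := smallcount g hg s ℓ
  have h2 := badcount g hg ε hε k ℓ hℓ hk hb
  set U := (Finset.range (g ^ ℓ)).filter fun y => ∃ p ∈ g.primeFactors, p ^ s ∣ y with hU
  set V := (Finset.range (g ^ ℓ)).filter fun c => ¬ EKNormalStr g ε k (paddedDigs g ℓ c) with hV
  set X := (Finset.range (g ^ ℓ)).filter fun n =>
      ¬ EKNormalStr g ε k (paddedDigs g ℓ (n ^ 2 % g ^ ℓ)) with hX
  set Z := X.filter (fun y => ∀ p ∈ g.primeFactors, ¬ p ^ s ∣ y) with hZ
  have hsub : X ⊆ U ∪ Z := by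
    intro y hy
    rw [Finset.mem_union]
    by_cases h : ∃ p ∈ g.primeFactors, p ^ s ∣ y
    · left; exact Finset.mem_filter.2 ⟨(Finset.mem_filter.1 hy).1, h⟩
    · right
      push Not at h
      exact Finset.mem_filter.2 ⟨hy, h⟩
  have hZc : Z.card ≤ C * V.card := by
    apply Finset.card_le_mul_card_image_of_maps_to (f := fun y => y ^ 2 % g ^ ℓ)
    · intro y hy
      have := (Finset.mem_filter.1 (Finset.mem_filter.1 hy).1).2
      exact Finset.mem_filter.2 ⟨Finset.mem_range.2 (Nat.mod_lt _ hgpos), this⟩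
    · intro c _
      refine le_trans (Finset.card_le_card ?_) (sqcount g hg s ℓ c)
      intro y hy
      obtain ⟨hy1, hy2⟩ := Finset.mem_filter.1 hy
      obtain ⟨hy3, hy4⟩ := Finset.mem_filter.1 hy1
      exact Finset.mem_filter.2 ⟨(Finset.mem_filter.1 hy3).1, hy4, hy2⟩
  have h3 : X.card ≤ U.card + C * V.card :=
    (Finset.card_le_card hsub).trans ((Finset.card_union_le _ _).trans (by omega))
  have h4 : (X.card : ℝ) ≤ U.card + C * V.card := by exact_mod_cast h3
  have h5 : (1:ℝ) ≤ (g:ℝ) ^ ℓ / ℓ := by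
    rw [le_div_iff₀ hl, one_mul]
    exact_mod_cast (Nat.lt_pow_self (by omega : 1 < g)).le
  calc (X.card : ℝ) ≤ U.card + C * V.card := h4
    _ ≤ g * ((g:ℝ) ^ ℓ / 2 ^ s + (g:ℝ) ^ ℓ / ℓ) + C * ((g:ℝ) ^ k * (16 * k / ε ^ 2) / ℓ * (g:ℝ) ^ ℓ) := by
      gcongr
      exact h1.trans (by gcongr)
    _ = _ := by ring

open scoped Classical in
/-- The second half `c(n,m) = n² mod g^ℓ` of the digits of `n²`, regarded as an `ℓ`-digit
string by padding with leading zeros (for `n ∈ [m', m]`, where `m' = ⌊m^{1−δ/2}⌋` and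
`ℓ = ⌊L(m²)/2⌋`), is `(ε,k)`-normal with `o(m)` exceptions. -/
theorem second_half_of_squares_normal (g : ℕ) (hg : 2 ≤ g) (ε : ℝ) (hε : 0 < ε) (k : ℕ)
    (δ : ℝ) (hδ : 0 < δ)
    (hCE : ∀ᶠ m : ℕ in atTop,
      (((Finset.Icc 1 m).filter fun a => ¬ EKNormalInt g ε k a).card : ℝ)
        ≤ (m : ℝ) ^ (1 - δ)) :
    (fun m : ℕ =>
        (((Finset.Icc ⌊(m : ℝ) ^ (1 - δ / 2)⌋₊ m).filter fun n =>
            ¬ EKNormalStr g ε k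
              (paddedDigs g ((Nat.log g (m ^ 2) + 1) / 2)
                (n ^ 2 % g ^ ((Nat.log g (m ^ 2) + 1) / 2)))).card : ℝ))
      =o[atTop] fun m : ℕ => (m : ℝ) := by
  have hgr : (0:ℝ) < g := by positivity
  rw [isLittleO_iff]
  intro η hη
  obtain ⟨s, hs⟩ : ∃ s : ℕ, (g:ℝ) ^ 2 * ((g:ℝ) / 2 ^ s) < η / 2 := by
    obtain ⟨s, hs⟩ := pow_unbounded_of_one_lt ((g:ℝ) ^ 3 / (η / 2)) (by norm_num : (1:ℝ) < 2)
    refine ⟨s, ?_⟩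
    rw [div_lt_iff₀ (by positivity)] at hs
    rw [← mul_div_assoc, div_lt_iff₀ (by positivity)]
    calc _ = (g:ℝ) ^ 3 := by ring
      _ < _ := hs
      _ = _ := by ring
  obtain ⟨D, hD⟩ := sqbad g hg ε hε k s
  have hev : ∀ᶠ ℓ : ℕ in atTop, 0 < ℓ ∧ k ≤ ℓ ∧ (k:ℝ) + 2 ≤ ε * ℓ / 2 ∧ (g:ℝ) ^ 2 * (D / ℓ) < η / 2 := by
    have t1 : Tendsto (fun ℓ : ℕ => (g:ℝ) ^ 2 * (D / ℓ)) atTop (nhds ((g:ℝ) ^ 2 * 0)) :=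
      (tendsto_const_div_atTop_nhds_zero_nat D).const_mul _
    rw [mul_zero] at t1
    have t2 : Tendsto (fun ℓ : ℕ => (ε / 2) * (ℓ:ℝ)) atTop atTop :=
      tendsto_natCast_atTop_atTop.const_mul_atTop (by positivity)
    filter_upwards [eventually_gt_atTop 0, eventually_ge_atTop k, t2.eventually_ge_atTop ((k:ℝ) + 2),
      t1.eventually_lt_const (by positivity : 0 < η / 2)] with ℓ a1 a2 a3 a4
    exact ⟨a1, a2, by linarith, a4⟩
  obtain ⟨b, hb⟩ := eventually_atTop.1 hev
  filter_upwards [eventually_ge_atTop (g ^ (b + 1)), eventually_gt_atTop 0] with m hm hm0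
  set ℓ := (Nat.log g (m ^ 2) + 1) / 2 with hℓ
  have hm1 : m < g ^ (ℓ + 1) := by
    have h1 : m ^ 2 < g ^ (Nat.log g (m ^ 2) + 1) := Nat.lt_pow_succ_log_self (by omega) _
    have h2 : g ^ (Nat.log g (m ^ 2) + 1) ≤ (g ^ (ℓ + 1)) ^ 2 := by
      rw [← pow_mul]
      exact Nat.pow_le_pow_right (by omega) (by omega)
    exact lt_of_pow_lt_pow_left₀ 2 (by positivity) (h1.trans_le h2)
  have hm2 : g ^ ℓ ≤ g * m := by
    have h1 : g ^ (Nat.log g (m ^ 2)) ≤ m ^ 2 := Nat.pow_log_le_self g (by positivity)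
    have h2 : (g ^ ℓ) ^ 2 ≤ (g * m) ^ 2 := by
      calc (g ^ ℓ) ^ 2 = g ^ (ℓ * 2) := by rw [pow_mul]
        _ ≤ g ^ (Nat.log g (m ^ 2) + 1) := Nat.pow_le_pow_right (by omega) (by omega)
        _ = g * g ^ (Nat.log g (m ^ 2)) := by rw [pow_succ']
        _ ≤ g * m ^ 2 := by gcongr
        _ ≤ g ^ 2 * m ^ 2 := by gcongr; nlinarith
        _ = _ := by ring
    exact (Nat.pow_le_pow_iff_left (by norm_num)).1 h2
  have hbl : b ≤ ℓ := by
    have := (Nat.pow_lt_pow_iff_right (by omega : 1 < g)).1 (hm.trans_lt hm1)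
    omega
  obtain ⟨a1, a2, a3, a4⟩ := hb ℓ hbl
  have hX := hD ℓ a1 a2 a3
  have hgpos : 0 < g ^ ℓ := by positivity
  set X := (Finset.range (g ^ ℓ)).filter fun n =>
      ¬ EKNormalStr g ε k (paddedDigs g ℓ (n ^ 2 % g ^ ℓ)) with hXd
  have hcard : ((Finset.Icc ⌊(m : ℝ) ^ (1 - δ / 2)⌋₊ m).filter fun n =>
            ¬ EKNormalStr g ε k (paddedDigs g ℓ (n ^ 2 % g ^ ℓ))).card ≤ (Finset.range g ×ˢ X).card := by
    apply Finset.card_le_card_of_injOn (fun n => (n / g ^ ℓ, n % g ^ ℓ))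
    · intro n hn
      obtain ⟨hn1, hn2⟩ := Finset.mem_filter.1 (Finset.mem_coe.1 hn)
      have hn3 := (Finset.mem_Icc.1 hn1).2
      rw [Finset.mem_coe, Finset.mem_product, Finset.mem_range, hXd, Finset.mem_filter, Finset.mem_range]
      refine ⟨?_, Nat.mod_lt _ hgpos, ?_⟩
      · show n / g ^ ℓ < g
        rw [Nat.div_lt_iff_lt_mul hgpos, ← pow_succ']
        omega
      · show ¬ EKNormalStr g ε k (paddedDigs g ℓ ((n % g ^ ℓ) ^ 2 % g ^ ℓ))
        rw [← Nat.pow_mod]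
        exact hn2
    · intro x _ y _ hxy
      simp only [Prod.mk.injEq] at hxy
      rw [← Nat.div_add_mod x (g ^ ℓ), ← Nat.div_add_mod y (g ^ ℓ), hxy.1, hxy.2]
  rw [Finset.card_product, Finset.card_range] at hcard
  have hm2' : (g:ℝ) ^ ℓ ≤ g * m := by exact_mod_cast hm2
  have hmr : (0:ℝ) < m := by exact_mod_cast hm0
  rw [Real.norm_natCast, Real.norm_natCast]
  have hpos : 0 ≤ (g:ℝ) / 2 ^ s + D / ℓ := by
    have : 0 ≤ ((g:ℝ) / 2 ^ s + D / ℓ) * (g:ℝ) ^ ℓ := le_trans (by positivity) hX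
    exact nonneg_of_mul_nonneg_left this (by positivity)
  calc _ ≤ (g:ℝ) * X.card := by exact_mod_cast hcard
    _ ≤ g * (((g:ℝ) / 2 ^ s + D / ℓ) * (g:ℝ) ^ ℓ) := by gcongr
    _ ≤ g * (((g:ℝ) / 2 ^ s + D / ℓ) * (g * m)) := by gcongr
    _ = ((g:ℝ) ^ 2 * ((g:ℝ) / 2 ^ s) + (g:ℝ) ^ 2 * (D / ℓ)) * m := by ring
    _ ≤ η * m := by gcongr; linarith
end
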